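/- arXiv:1312.6875 — 2 statements merged into one kernel-verified Lean document; each statement's English description precedes it below -/
import Mathlib

section
/- Let W be a discrete memoryless channel with R_cr < C, and suppose Q ∈ P(𝒳) and R > 0 are such that the pair (Q,W) is singular and R_cr(Q) < R < I(Q;W). Then there exists a constant K₁ > 0, depending only on W, R and Q, such that for every positive integer N the ensemble average error probability satisfies P̄_e(Q,N,R) ≤ (K₁/√N) · e^{−N·E_r(R,Q)}. -/
open Real BigOperators
open scoped Classical

namespace RCB

/-- A probability distribution on a finite alphabet. -/
def IsDist {α : Type*} [Fintype α] (Q : α → ℝ) : Prop :=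
  (∀ a, 0 ≤ Q a) ∧ ∑ a, Q a = 1

/-- A discrete memoryless channel, i.e. a stochastic matrix from `X` to `Y`. -/
def IsChannel {X Y : Type*} [Fintype X] [Fintype Y] (W : X → Y → ℝ) : Prop :=
  (∀ x y, 0 ≤ W x y) ∧ ∀ x, ∑ y, W x y = 1

/-- The Gallager function `E_o(ρ, Q)`. -/
noncomputable def Eo {X Y : Type*} [Fintype X] [Fintype Y]
    (W : X → Y → ℝ) (ρ : ℝ) (Q : X → ℝ) : ℝ :=
  - Real.log (∑ y, (∑ x, Q x * W x y ^ (1 / (1 + ρ))) ^ (1 + ρ))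

/-- The random coding exponent `E_r(R, Q)` for input distribution `Q`. -/
noncomputable def ErQ {X Y : Type*} [Fintype X] [Fintype Y]
    (W : X → Y → ℝ) (R : ℝ) (Q : X → ℝ) : ℝ :=
  sSup ((fun ρ => -ρ * R + Eo W ρ Q) '' Set.Icc (0 : ℝ) 1)

/-- The random coding exponent `E_r(R)`. -/
noncomputable def Er {X Y : Type*} [Fintype X] [Fintype Y]
    (W : X → Y → ℝ) (R : ℝ) : ℝ :=
  sSup {v : ℝ | ∃ Q : X → ℝ, IsDist Q ∧ v = ErQ W R Q}

/-- The mutual information `I(Q; W)` (natural logarithm). -/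
noncomputable def MI {X Y : Type*} [Fintype X] [Fintype Y]
    (W : X → Y → ℝ) (Q : X → ℝ) : ℝ :=
  ∑ x, ∑ y, Q x * W x y * Real.log (W x y / ∑ x', Q x' * W x' y)

/-- The capacity `C = max_Q I(Q;W)`. -/
noncomputable def Capacity {X Y : Type*} [Fintype X] [Fintype Y]
    (W : X → Y → ℝ) : ℝ :=
  sSup {v : ℝ | ∃ Q : X → ℝ, IsDist Q ∧ v = MI W Q}

/-- The critical rate of the input distribution `Q`:
`R_cr(Q) = ∂E_o(ρ,Q)/∂ρ |_{ρ=1}`. -/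
noncomputable def RcrQ {X Y : Type*} [Fintype X] [Fintype Y]
    (W : X → Y → ℝ) (Q : X → ℝ) : ℝ :=
  deriv (fun ρ => Eo W ρ Q) 1

/-- The critical rate of the channel: the largest `R` with
`E_r(R) = -R + max_Q E_o(1,Q)`. -/
noncomputable def Rcr {X Y : Type*} [Fintype X] [Fintype Y]
    (W : X → Y → ℝ) : ℝ :=
  sSup {R : ℝ | Er W R = -R + sSup {v : ℝ | ∃ Q : X → ℝ, IsDist Q ∧ v = Eo W 1 Q}}

/-- The rate `R_∞ = inf {R ≥ 0 : E_SP(R) < ∞}` (finiteness of the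
sphere-packing exponent expressed as boundedness of the family of affine maps). -/
noncomputable def Rinf {X Y : Type*} [Fintype X] [Fintype Y]
    (W : X → Y → ℝ) : ℝ :=
  sInf {R : ℝ | 0 ≤ R ∧
    BddAbove {v : ℝ | ∃ (Q : X → ℝ) (ρ : ℝ), IsDist Q ∧ 0 ≤ ρ ∧ v = -ρ * R + Eo W ρ Q}}

/-- The pair `(Q, W)` is singular if `W(y|x) = W(y|z)` whenever
`Q(x)W(y|x)Q(z)W(y|z) > 0`. -/
def Singular {X Y : Type*} (W : X → Y → ℝ) (Q : X → ℝ) : Prop :=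
  ∀ x y z, 0 < Q x * W x y * (Q z * W z y) → W x y = W z y

/-- `ρ^*_R(Q) = -∂E_r(a,Q)/∂a |_{a=R}`. -/
noncomputable def rhoStarQ {X Y : Type*} [Fintype X] [Fintype Y]
    (W : X → Y → ℝ) (Q : X → ℝ) (R : ℝ) : ℝ :=
  - deriv (fun a => ErQ W a Q) R

/-- The number of messages of an `(N, R)` code: `⌈exp (N R)⌉`. -/
noncomputable def nMsgs (N : ℕ) (R : ℝ) : ℕ := ⌈Real.exp (N * R)⌉₊

/-- The `N`-fold memoryless extension of the channel `W`. -/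
noncomputable def Wn {X Y : Type*} (W : X → Y → ℝ) {N : ℕ}
    (c : Fin N → X) (y : Fin N → Y) : ℝ :=
  ∏ n, W (c n) (y n)

/-- The maximal error probability of the code `(f, φ)` over the `N`-fold
memoryless extension of `W`. -/
noncomputable def Pmax {X Y : Type*} [Fintype X] [Fintype Y] {M N : ℕ}
    (W : X → Y → ℝ) (f : Fin M → Fin N → X) (φ : (Fin N → Y) → Fin M) : ℝ :=
  ⨆ m : Fin M, ∑ y : Fin N → Y, Wn W (f m) y * (if φ y ≠ m then (1 : ℝ) else 0)

/-- The ensemble average error probability `P̄_e(Q, N, R)`: the `⌈exp (N R)⌉`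
codewords are drawn i.i.d. from `Q^N` and decoded by maximum-likelihood
decoding, ties counted as errors. -/
noncomputable def Pbar {X Y : Type*} [Fintype X] [Fintype Y]
    (W : X → Y → ℝ) (Q : X → ℝ) (N : ℕ) (R : ℝ) : ℝ :=
  ∑ c : Fin (nMsgs N R) → Fin N → X,
    (∏ m, ∏ n, Q (c m n)) *
      ((nMsgs N R : ℝ)⁻¹ *
        ∑ m, ∑ y : Fin N → Y,
          Wn W (c m) y *
            (if ∃ m', m' ≠ m ∧ Wn W (c m) y ≤ Wn W (c m') y then (1 : ℝ) else 0))

/-- The tilted output distribution `f_ρ`. -/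
noncomputable def fRho {X Y : Type*} [Fintype X] [Fintype Y]
    (W : X → Y → ℝ) (Q : X → ℝ) (ρ : ℝ) (y : Y) : ℝ :=
  (∑ x, Q x * W x y ^ (1 / (1 + ρ))) ^ (1 + ρ) /
    ∑ b, (∑ a, Q a * W a b ^ (1 / (1 + ρ))) ^ (1 + ρ)

/-- The cumulant generating function
`Λ_ρ(λ) = log E_{P_{X,Y}}[exp(λ log (f_ρ(Y)/W(Y|X)))]` with `P_{X,Y} = Q × W`. -/
noncomputable def Lam {X Y : Type*} [Fintype X] [Fintype Y]
    (W : X → Y → ℝ) (Q : X → ℝ) (ρ : ℝ) (t : ℝ) : ℝ :=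
  Real.log (∑ x, ∑ y, Q x * W x y * Real.exp (t * Real.log (fRho W Q ρ y / W x y)))

/-- `P_{X,Y,Z}(S̃_Q)` where `P_{X,Y,Z}(x,y,z) = Q(x)W(y|x)Q(z)` and
`S̃_Q = {(x,y,z) : Q(x)W(y|x)Q(z)W(y|z) > 0}`. -/
noncomputable def PStilde {X Y : Type*} [Fintype X] [Fintype Y]
    (W : X → Y → ℝ) (Q : X → ℝ) : ℝ :=
  ∑ x, ∑ y, ∑ z,
    if 0 < Q x * W x y * (Q z * W z y) then Q x * W x y * Q z else 0

/-- The bivariate cumulant generating function `Λ_{1,ρ}(v)` with respect to the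
conditional distribution `P̃_{X,Y,Z}` of `P_{X,Y,Z}` given `S̃_Q`. -/
noncomputable def Lam1 {X Y : Type*} [Fintype X] [Fintype Y]
    (W : X → Y → ℝ) (Q : X → ℝ) (ρ : ℝ) (v : ℝ × ℝ) : ℝ :=
  Real.log ((∑ x, ∑ y, ∑ z,
    if 0 < Q x * W x y * (Q z * W z y) then
      Q x * W x y * Q z *
        Real.exp (v.1 * Real.log (W x y / fRho W Q ρ y) +
          v.2 * Real.log (W z y / W x y))
    else 0) / PStilde W Q)

/-- The subdifferential of `f : ℝ → ℝ` at `R` (for convex `f`). -/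
def Subderiv (f : ℝ → ℝ) (R : ℝ) : Set ℝ :=
  {g : ℝ | ∀ x, f R + g * (x - R) ≤ f x}

/-- The tilted backward channel `P^ρ_{X|Y}`. -/
noncomputable def PXgY {X Y : Type*} [Fintype X]
    (W : X → Y → ℝ) (Q : X → ℝ) (ρ : ℝ) (x : X) (y : Y) : ℝ :=
  Q x * W x y ^ (1 / (1 + ρ)) / ∑ a, Q a * W a y ^ (1 / (1 + ρ))

/-- The tilted joint distribution `P^ρ_{X,Y}(x,y) = P^ρ_{X|Y}(x|y) P^ρ_Y(y)`. -/
noncomputable def PXY {X Y : Type*} [Fintype X] [Fintype Y]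
    (W : X → Y → ℝ) (Q : X → ℝ) (ρ : ℝ) (x : X) (y : Y) : ℝ :=
  PXgY W Q ρ x y * fRho W Q ρ y

theorem summable_exp_neg_mul_abs_int {η : ℝ} (hη : 0 < η) :
    Summable fun k : ℤ => Real.exp (-η * |(k : ℝ)|) := by
  have h : Summable fun n : ℕ => Real.exp (-η * n) := by
    have := Real.summable_exp_nat_mul_iff.mpr (neg_lt_zero.mpr hη)
    simpa [mul_comm] using this
  refine Summable.of_nat_of_neg ?_ ?_ <;> simpa using h

/-- A characteristic function of a finitely supported distribution, estimated with the help of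
two atoms. -/
theorem norm_charFun_le {Y : Type*} [Fintype Y] {p : Y → ℝ} (hp : IsDist p) (z : Y → ℝ)
    (a b : Y) (θ : ℝ) :
    ‖∑ y, (p y : ℂ) * Complex.exp ((θ * z y : ℝ) * Complex.I)‖ ≤
      Real.exp (-(p a * p b * (1 - Real.cos (θ * (z a - z b)))) / 2) := by
  have hre : ‖∑ y, (p y : ℂ) * Complex.exp ((θ * z y : ℝ) * Complex.I)‖ ^ 2 =
      ∑ y, ∑ y', p y * p y' * Real.cos (θ * (z y - z y')) := by
    rw [← Complex.normSq_eq_norm_sq, Complex.normSq_apply, Complex.re_sum, Complex.im_sum]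
    simp only [Complex.re_ofReal_mul, Complex.im_ofReal_mul, Complex.exp_ofReal_mul_I_re,
      Complex.exp_ofReal_mul_I_im, Finset.sum_mul_sum, ← Finset.sum_add_distrib]
    refine Finset.sum_congr rfl fun y _ => Finset.sum_congr rfl fun y' _ => ?_
    rw [mul_sub, Real.cos_sub]
    ring
  have hone : ∑ y, ∑ y', p y * p y' = 1 := by
    rw [← Finset.sum_mul_sum, hp.2, one_mul]
  have hnn : ∀ y y', 0 ≤ p y * p y' * (1 - Real.cos (θ * (z y - z y'))) := fun y y' =>
    mul_nonneg (mul_nonneg (hp.1 y) (hp.1 y')) (sub_nonneg.mpr (Real.cos_le_one _))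
  have hsingle : p a * p b * (1 - Real.cos (θ * (z a - z b))) ≤
      ∑ y, ∑ y', p y * p y' * (1 - Real.cos (θ * (z y - z y'))) :=
    (Finset.single_le_sum (fun y' _ => hnn a y') (Finset.mem_univ b)).trans
      (Finset.single_le_sum (f := fun y => ∑ y', p y * p y' * (1 - Real.cos (θ * (z y - z y'))))
        (fun y _ => Finset.sum_nonneg fun y' _ => hnn y y') (Finset.mem_univ a))
  have hsplit : ∑ y, ∑ y', p y * p y' * (1 - Real.cos (θ * (z y - z y'))) =
      1 - ∑ y, ∑ y', p y * p y' * Real.cos (θ * (z y - z y')) := by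
    simp only [mul_sub, mul_one, Finset.sum_sub_distrib, hone]
  refine le_of_sq_le_sq ?_ (Real.exp_pos _).le
  rw [hre, ← Real.exp_nat_mul]
  refine le_trans ?_ (Real.one_sub_le_exp_neg (p a * p b * (1 - Real.cos (θ * (z a - z b)))))
    |>.trans_eq ?_
  · linarith
  · congr 1
    push_cast
    ring

theorem sum_prod_mul_exp_sum {Y : Type*} [Fintype Y] (p z : Y → ℝ) (N : ℕ) (θ : ℝ) :
    ∑ ω : Fin N → Y, ((∏ n, p (ω n) : ℝ) : ℂ) *
        Complex.exp ((θ * ∑ n, z (ω n) : ℝ) * Complex.I) =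
      (∑ y, (p y : ℂ) * Complex.exp ((θ * z y : ℝ) * Complex.I)) ^ N := by
  rw [Fintype.sum_pow]
  refine Finset.sum_congr rfl fun ω _ => ?_
  rw [Finset.prod_mul_distrib, ← Complex.exp_sum]
  push_cast
  rw [Finset.mul_sum, Finset.sum_mul]

theorem isDist_prod {Y : Type*} [Fintype Y] {p : Y → ℝ} (hp : IsDist p) (N : ℕ) :
    IsDist fun ω : Fin N → Y => ∏ n, p (ω n) :=
  ⟨fun _ => Finset.prod_nonneg fun _ _ => hp.1 _, by
    rw [← Fintype.sum_pow, hp.2, one_pow]⟩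

/-- The concentration function of a sum of `N` i.i.d. nondegenerate finitely supported
random variables is `O(1 / √N)`. -/
theorem exists_concentration_le {Y : Type*} [Fintype Y] {p : Y → ℝ} (hp : IsDist p) (z : Y → ℝ)
    {a b : Y} (ha : 0 < p a) (hb : 0 < p b) (hab : z a ≠ z b) :
    ∃ C : ℝ, 0 < C ∧ ∀ N : ℕ, 0 < N → ∀ t : ℝ,
      (∑ ω : Fin N → Y, (∏ n, p (ω n)) * if |∑ n, z (ω n) - t| ≤ 1 then (1 : ℝ) else 0) ≤
        C / Real.sqrt N := by
  set d := z a - z b with hd_def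
  have hd : 0 < |d| := abs_pos.mpr (sub_ne_zero.mpr hab)
  obtain ⟨δ, hδ0, hδ1, hδd⟩ : ∃ δ : ℝ, 0 < δ ∧ δ ≤ 1 ∧ δ * |d| ≤ 1 := by
    refine ⟨min 1 (1 / |d|), by positivity, min_le_left _ _, ?_⟩
    exact (mul_le_mul_of_nonneg_right (min_le_right _ _) hd.le).trans_eq (by field_simp)
  set κ := p a * p b * d ^ 2 / π ^ 2 * δ ^ 2 / 4 with hκ_def
  have hd2 : 0 < d ^ 2 := by rw [← sq_abs]; positivity
  have hκ : 0 < κ := by positivity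
  have hsum := summable_exp_neg_mul_abs_int hκ
  set T := ∑' k : ℤ, Real.exp (-κ * |(k : ℝ)|) with hT_def
  have hT : 0 < T := hsum.tsum_pos (fun _ => (Real.exp_pos _).le) 0 (Real.exp_pos _)
  refine ⟨4 * T, by positivity, fun N hN t => ?_⟩
  have hN1 : (1 : ℝ) ≤ N := by exact_mod_cast hN
  have hsN : 1 ≤ Real.sqrt N := Real.one_le_sqrt.mpr hN1
  obtain ⟨J, hJl, hJu⟩ : ∃ J : ℕ, Real.sqrt N ≤ J ∧ (J : ℝ) ≤ 2 * Real.sqrt N :=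
    ⟨⌈Real.sqrt N⌉₊, Nat.le_ceil _, by
      have := Nat.ceil_lt_add_one (Real.sqrt_nonneg N); linarith⟩
  have hJ0 : (0 : ℝ) < J := by linarith
  have hJ2 : (J : ℝ) ^ 2 ≤ 4 * N := by
    have h1 := Real.sq_sqrt (Nat.cast_nonneg (α := ℝ) N)
    nlinarith
  set e : ℝ → ℂ := fun x => Complex.exp ((x : ℂ) * Complex.I) with he_def
  have he_norm : ∀ x, ‖e x‖ = 1 := fun x => Complex.norm_exp_ofReal_mul_I x
  set P : (Fin N → Y) → ℝ := fun ω => ∏ n, p (ω n) with hP_def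
  have hPnn : ∀ ω, 0 ≤ P ω := (isDist_prod hp N).1
  set S : (Fin N → Y) → ℝ := fun ω => ∑ n, z (ω n) with hS_def
  set F : (Fin N → Y) → ℂ := fun ω => ∑ j ∈ Finset.range J, e (j * (δ / J) * (S ω - t)) with hF_def
  -- lower bound on the kernel
  have hlow : ∀ ω, (if |S ω - t| ≤ 1 then (1 : ℝ) else 0) ≤ 4 / (J : ℝ) ^ 2 * ‖F ω‖ ^ 2 := by
    intro ω
    split_ifs with h
    · have hre : (J : ℝ) / 2 ≤ (F ω).re := by
        rw [hF_def, Complex.re_sum]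
        have : ∀ j ∈ Finset.range J, (1 / 2 : ℝ) ≤ (e (j * (δ / J) * (S ω - t))).re := by
          intro j hj
          have hjJ : (j : ℝ) ≤ J := by exact_mod_cast (Finset.mem_range.mp hj).le
          rw [he_def, Complex.exp_ofReal_mul_I_re]
          have h1 : |(j : ℝ) * (δ / J) * (S ω - t)| ≤ 1 := by
            rw [abs_mul, abs_of_nonneg (by positivity)]
            have h2 : (j : ℝ) * (δ / J) ≤ 1 := by
              rw [mul_div_assoc', div_le_one hJ0]
              nlinarith
            exact mul_le_one₀ h2 (abs_nonneg _) h
          have h3 := Real.one_sub_sq_div_two_le_cos (x := (j : ℝ) * (δ / J) * (S ω - t))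
          have h4 := (sq_le_one_iff_abs_le_one _).mpr h1
          linarith
        have := Finset.sum_le_sum this
        simp only [Finset.sum_const, Finset.card_range, nsmul_eq_mul] at this
        linarith
      have hn : (J : ℝ) / 2 ≤ ‖F ω‖ := hre.trans (Complex.re_le_norm _)
      rw [div_mul_eq_mul_div, le_div_iff₀ (by positivity)]
      nlinarith
    · positivity
  -- expansion of the second moment
  have hexp : ((∑ ω, P ω * ‖F ω‖ ^ 2 : ℝ) : ℂ) =
      ∑ j ∈ Finset.range J, ∑ k ∈ Finset.range J, e (-(((j : ℝ) - k) * (δ / J) * t)) *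
        (∑ y, (p y : ℂ) * e (((j : ℝ) - k) * (δ / J) * z y)) ^ N := by
    have h1 : ∀ ω, ((‖F ω‖ ^ 2 : ℝ) : ℂ) = ∑ j ∈ Finset.range J, ∑ k ∈ Finset.range J,
        e (-(((j : ℝ) - k) * (δ / J) * t)) * e (((j : ℝ) - k) * (δ / J) * S ω) := by
      intro ω
      rw [← Complex.normSq_eq_norm_sq, Complex.normSq_eq_conj_mul_self, mul_comm, hF_def, map_sum,
        Finset.sum_mul_sum]
      refine Finset.sum_congr rfl fun j _ => Finset.sum_congr rfl fun k _ => ?_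
      simp only [he_def]
      rw [← Complex.exp_conj, ← Complex.exp_add, ← Complex.exp_add]
      congr 1
      simp only [map_mul, Complex.conj_ofReal, Complex.conj_I]
      push_cast
      ring
    have h2 : ∀ θ : ℝ, (∑ y, (p y : ℂ) * e (θ * z y)) ^ N = ∑ ω, (P ω : ℂ) * e (θ * S ω) :=
      fun θ => (sum_prod_mul_exp_sum p z N θ).symm
    simp only [h2, Finset.mul_sum]
    rw [Complex.ofReal_sum]
    simp only [Complex.ofReal_mul, h1, Finset.mul_sum]
    rw [Finset.sum_comm]
    refine Finset.sum_congr rfl fun j _ => ?_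
    rw [Finset.sum_comm]
    refine Finset.sum_congr rfl fun k _ => Finset.sum_congr rfl fun ω _ => ?_
    ring
  have hterm : ∀ j ∈ Finset.range J, ∀ k ∈ Finset.range J,
      ‖e (-(((j : ℝ) - k) * (δ / J) * t)) *
        (∑ y, (p y : ℂ) * e (((j : ℝ) - k) * (δ / J) * z y)) ^ N‖ ≤
      Real.exp (-κ * |(((j : ℤ) - k : ℤ) : ℝ)|) := by
    intro j hj k hk
    have hjJ : (j : ℝ) ≤ J := by exact_mod_cast (Finset.mem_range.mp hj).le
    have hkJ : (k : ℝ) ≤ J := by exact_mod_cast (Finset.mem_range.mp hk).le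
    set m : ℤ := (j : ℤ) - k with hm_def
    have hm : (j : ℝ) - k = m := by rw [hm_def]; push_cast; ring
    have hmJ : |(m : ℝ)| ≤ J := by
      rw [← hm, abs_le]
      constructor <;> linarith [Nat.cast_nonneg (α := ℝ) j, Nat.cast_nonneg (α := ℝ) k]
    have hm2 : |(m : ℝ)| ≤ (m : ℝ) ^ 2 := by
      have h := Int.natAbs_le_self_sq m
      rw [Int.natCast_natAbs] at h
      exact_mod_cast h
    rw [norm_mul, he_norm, one_mul, norm_pow, hm]
    have hφ := norm_charFun_le hp z a b (m * (δ / J))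
    rw [← hd_def] at hφ
    have hcos : Real.cos ((m : ℝ) * (δ / J) * d) ≤ 1 - 2 / π ^ 2 * ((m : ℝ) * (δ / J) * d) ^ 2 := by
      refine Real.cos_le_one_sub_mul_cos_sq ?_
      have : |(m : ℝ) * (δ / J) * d| = |(m : ℝ)| / J * (δ * |d|) := by
        rw [abs_mul, abs_mul, abs_of_pos (div_pos hδ0 hJ0)]
        ring
      rw [this]
      have h1 : |(m : ℝ)| / J * (δ * |d|) ≤ 1 :=
        mul_le_one₀ ((div_le_one hJ0).mpr hmJ) (by positivity) hδd
      linarith [Real.pi_gt_three]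
    refine (pow_le_pow_left₀ (norm_nonneg _) hφ N).trans ?_
    rw [← Real.exp_nat_mul, Real.exp_le_exp]
    have hpp : 0 < p a * p b := mul_pos ha hb
    have h5 : p a * p b * (2 / π ^ 2 * ((m : ℝ) * (δ / J) * d) ^ 2) ≤
        p a * p b * (1 - Real.cos ((m : ℝ) * (δ / J) * d)) :=
      mul_le_mul_of_nonneg_left (by linarith) hpp.le
    have h6 : κ * (m : ℝ) ^ 2 ≤
        N * (p a * p b * (2 / π ^ 2 * ((m : ℝ) * (δ / J) * d) ^ 2)) / 2 := by
      have : N * (p a * p b * (2 / π ^ 2 * ((m : ℝ) * (δ / J) * d) ^ 2)) / 2 =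
          κ * (m : ℝ) ^ 2 * (4 * N / (J : ℝ) ^ 2) := by
        rw [hκ_def]
        field_simp
      rw [this]
      exact le_mul_of_one_le_right (by positivity) ((one_le_div (by positivity)).mpr hJ2)
    have h7 := mul_le_mul_of_nonneg_left h5 (Nat.cast_nonneg (α := ℝ) N)
    have h8 := mul_le_mul_of_nonneg_left hm2 hκ.le
    linarith
  have hrow : ∀ j ∈ Finset.range J,
      ∑ k ∈ Finset.range J, Real.exp (-κ * |(((j : ℤ) - k : ℤ) : ℝ)|) ≤ T := by
    intro j _
    have hinj : Set.InjOn (fun k : ℕ => (j : ℤ) - k) (Finset.range J) := by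
      intro x _ y _ h
      simp only at h
      omega
    rw [← Finset.sum_image (f := fun k : ℤ => Real.exp (-κ * |(k : ℝ)|)) hinj]
    exact hsum.sum_le_tsum _ fun _ _ => (Real.exp_pos _).le
  have hmoment : ∑ ω, P ω * ‖F ω‖ ^ 2 ≤ J * T := by
    calc ∑ ω, P ω * ‖F ω‖ ^ 2 ≤ ‖((∑ ω, P ω * ‖F ω‖ ^ 2 : ℝ) : ℂ)‖ := by
          rw [Complex.norm_real]; exact le_abs_self _
      _ ≤ ∑ j ∈ Finset.range J, ∑ k ∈ Finset.range J,
            Real.exp (-κ * |(((j : ℤ) - k : ℤ) : ℝ)|) := by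
          rw [hexp]
          exact (norm_sum_le _ _).trans (Finset.sum_le_sum fun j hj =>
            (norm_sum_le _ _).trans (Finset.sum_le_sum fun k hk => hterm j hj k hk))
      _ ≤ ∑ j ∈ Finset.range J, T := Finset.sum_le_sum hrow
      _ = J * T := by simp
  calc ∑ ω, P ω * (if |S ω - t| ≤ 1 then (1 : ℝ) else 0)
      ≤ ∑ ω, P ω * (4 / (J : ℝ) ^ 2 * ‖F ω‖ ^ 2) :=
        Finset.sum_le_sum fun ω _ => mul_le_mul_of_nonneg_left (hlow ω) (hPnn ω)
    _ = 4 / (J : ℝ) ^ 2 * ∑ ω, P ω * ‖F ω‖ ^ 2 := by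
        rw [Finset.mul_sum]
        exact Finset.sum_congr rfl fun ω _ => by ring
    _ ≤ 4 / (J : ℝ) ^ 2 * (J * T) := mul_le_mul_of_nonneg_left hmoment (by positivity)
    _ = 4 * T / J := by field_simp
    _ ≤ 4 * T / Real.sqrt N := div_le_div_of_nonneg_left (by positivity) (by linarith) hJl

theorem exists_sum_exp_neg_abs_le {Y : Type*} [Fintype Y] {p : Y → ℝ} (hp : IsDist p) (z : Y → ℝ)
    {a b : Y} (ha : 0 < p a) (hb : 0 < p b) (hab : z a ≠ z b) {η : ℝ} (hη : 0 < η) :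
    ∃ C : ℝ, 0 < C ∧ ∀ N : ℕ, 0 < N → ∀ t : ℝ,
      (∑ ω : Fin N → Y, (∏ n, p (ω n)) * Real.exp (-η * |∑ n, z (ω n) - t|)) ≤
        C / Real.sqrt N := by
  obtain ⟨C, hC, h⟩ := exists_concentration_le hp z ha hb hab
  have hsum := summable_exp_neg_mul_abs_int hη
  set T := ∑' k : ℤ, Real.exp (-η * |(k : ℝ)|) with hT_def
  have hT : 0 < T := hsum.tsum_pos (fun _ => (Real.exp_pos _).le) 0 (Real.exp_pos _)
  refine ⟨Real.exp η * T * C, by positivity, fun N hN t => ?_⟩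
  have hPnn := (isDist_prod hp N).1
  set S : (Fin N → Y) → ℝ := fun ω => ∑ n, z (ω n) with hS_def
  set A : Finset ℤ := Finset.univ.image fun ω => ⌊S ω - t⌋ with hA_def
  have hfl : ∀ ω, |S ω - (t + (⌊S ω - t⌋ : ℝ))| ≤ 1 := fun ω => by
    rw [abs_le]
    constructor <;> linarith [Int.floor_le (S ω - t), Int.lt_floor_add_one (S ω - t)]
  have hpt : ∀ ω, Real.exp (-η * |S ω - t|) ≤ ∑ k ∈ A, Real.exp η * Real.exp (-η * |(k : ℝ)|) *
      if |S ω - (t + k)| ≤ 1 then (1 : ℝ) else 0 := by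
    intro ω
    refine le_trans ?_ (Finset.single_le_sum (f := fun k : ℤ =>
      Real.exp η * Real.exp (-η * |(k : ℝ)|) * if |S ω - (t + k)| ≤ 1 then (1 : ℝ) else 0)
      (fun k _ => by positivity) (Finset.mem_image_of_mem _ (Finset.mem_univ ω)))
    simp only [if_pos (hfl ω), mul_one]
    rw [← Real.exp_add, Real.exp_le_exp]
    have h1 := abs_sub_abs_le_abs_sub (⌊S ω - t⌋ : ℝ) (S ω - t)
    have h2 := hfl ω
    rw [abs_sub_comm, show t + (⌊S ω - t⌋ : ℝ) - S ω = ⌊S ω - t⌋ - (S ω - t) by ring] at h2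
    nlinarith
  calc ∑ ω : Fin N → Y, (∏ n, p (ω n)) * Real.exp (-η * |S ω - t|)
      ≤ ∑ ω : Fin N → Y, (∏ n, p (ω n)) * ∑ k ∈ A, Real.exp η * Real.exp (-η * |(k : ℝ)|) *
          if |S ω - (t + k)| ≤ 1 then (1 : ℝ) else 0 :=
        Finset.sum_le_sum fun ω _ => mul_le_mul_of_nonneg_left (hpt ω) (hPnn ω)
    _ = ∑ k ∈ A, Real.exp η * Real.exp (-η * |(k : ℝ)|) * ∑ ω : Fin N → Y, (∏ n, p (ω n)) *
          if |S ω - (t + k)| ≤ 1 then (1 : ℝ) else 0 := by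
        simp only [Finset.mul_sum]
        rw [Finset.sum_comm]
        exact Finset.sum_congr rfl fun k _ => Finset.sum_congr rfl fun ω _ => by ring
    _ ≤ ∑ k ∈ A, Real.exp η * Real.exp (-η * |(k : ℝ)|) * (C / Real.sqrt N) :=
        Finset.sum_le_sum fun k _ => mul_le_mul_of_nonneg_left (h N hN _) (by positivity)
    _ = Real.exp η * (∑ k ∈ A, Real.exp (-η * |(k : ℝ)|)) * (C / Real.sqrt N) := by
        rw [← Finset.sum_mul, ← Finset.mul_sum]
    _ ≤ Real.exp η * T * (C / Real.sqrt N) := by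
        gcongr
        exact hsum.sum_le_tsum _ fun _ _ => (Real.exp_pos _).le
    _ = Real.exp η * T * C / Real.sqrt N := by ring
theorem sum_prod_mul_single {ι α : Type*} [Fintype ι] [DecidableEq ι] [Fintype α]
    {P : α → ℝ} (hP : IsDist P)
    (m : ι) (f : α → ℝ) :
    ∑ c : ι → α, (∏ i, P (c i)) * f (c m) = ∑ a, P a * f a := by
  have h := Fintype.prod_sum fun (i : ι) (a : α) => P a * if i = m then f a else 1
  simp only [Finset.prod_mul_distrib, Finset.prod_ite_eq', Finset.mem_univ, if_true] at h
  rw [← h, Fintype.prod_eq_single m]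
  · simp
  · intro i hi
    simp [hi, hP.2]

theorem sum_prod_mul_pair {ι α : Type*} [Fintype ι] [DecidableEq ι] [Fintype α]
    {P : α → ℝ} (hP : IsDist P)
    {m m' : ι} (hm : m ≠ m') (f g : α → ℝ) :
    ∑ c : ι → α, (∏ i, P (c i)) * (f (c m) * g (c m')) =
      (∑ a, P a * f a) * ∑ a, P a * g a := by
  have h := Fintype.prod_sum fun (i : ι) (a : α) =>
    P a * ((if i = m then f a else 1) * if i = m' then g a else 1)
  simp only [Finset.prod_mul_distrib, Finset.prod_ite_eq', Finset.mem_univ, if_true] at h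
  rw [← h, Fintype.prod_eq_mul m m' hm]
  · simp [hm, hm.symm]
  · intro i hi
    simp [hi.1, hi.2, hP.2]

/-- The union bound for a random code with i.i.d. codewords and likelihoods `w`, at a fixed
channel output. -/
theorem sum_prod_mul_error_le {α : Type*} [Fintype α] {P : α → ℝ} (hP : IsDist P)
    {w : α → ℝ} (hw : ∀ a, 0 ≤ w a) {M : ℕ} (m : Fin M) :
    ∑ c : Fin M → α, (∏ i, P (c i)) *
        (w (c m) * if ∃ m', m' ≠ m ∧ w (c m) ≤ w (c m') then (1 : ℝ) else 0) ≤
      (∑ a, P a * w a) * min 1 (((M : ℝ) - 1) * ∑ a, P a * if 0 < w a then (1 : ℝ) else 0) := by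
  have hPnn : ∀ c : Fin M → α, 0 ≤ ∏ i, P (c i) := fun c =>
    Finset.prod_nonneg fun i _ => hP.1 (c i)
  rw [mul_min_of_nonneg _ _ (Finset.sum_nonneg fun a _ => mul_nonneg (hP.1 a) (hw a)), mul_one]
  refine le_min ?_ ?_
  · rw [← sum_prod_mul_single hP m w]
    refine Finset.sum_le_sum fun c _ => mul_le_mul_of_nonneg_left ?_ (hPnn c)
    exact mul_le_of_le_one_right (hw _) (by split_ifs <;> norm_num)
  · have hpt : ∀ c : Fin M → α,
        (w (c m) * if ∃ m', m' ≠ m ∧ w (c m) ≤ w (c m') then (1 : ℝ) else 0) ≤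
          ∑ m' ∈ Finset.univ.erase m, w (c m) * if 0 < w (c m') then (1 : ℝ) else 0 := by
      intro c
      have hnn : ∀ m' ∈ Finset.univ.erase m,
          0 ≤ w (c m) * if 0 < w (c m') then (1 : ℝ) else 0 := fun m' _ =>
        mul_nonneg (hw _) (by split_ifs <;> norm_num)
      split_ifs with h
      · obtain ⟨m', hne, hle⟩ := h
        rcases (hw (c m)).eq_or_lt with h0 | h0
        · simp [← h0]
        · refine le_trans ?_ (Finset.single_le_sum hnn
            (Finset.mem_erase.mpr ⟨hne, Finset.mem_univ m'⟩))
          rw [if_pos (h0.trans_le hle)]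
      · rw [mul_zero]
        exact Finset.sum_nonneg hnn
    calc _ ≤ ∑ c : Fin M → α, (∏ i, P (c i)) *
          ∑ m' ∈ Finset.univ.erase m, w (c m) * if 0 < w (c m') then (1 : ℝ) else 0 :=
          Finset.sum_le_sum fun c _ => mul_le_mul_of_nonneg_left (hpt c) (hPnn c)
      _ = ∑ m' ∈ Finset.univ.erase m, (∑ a, P a * w a) *
          ∑ a, P a * if 0 < w a then (1 : ℝ) else 0 := by
          simp only [Finset.mul_sum (Finset.univ.erase m)]
          rw [Finset.sum_comm]
          exact Finset.sum_congr rfl fun m' hm' =>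
            sum_prod_mul_pair hP (Finset.ne_of_mem_erase hm').symm w
              fun a => if 0 < w a then (1 : ℝ) else 0
      _ = _ := by
          rw [Finset.sum_const, Finset.card_erase_of_mem (Finset.mem_univ m), Finset.card_univ,
            Fintype.card_fin, nsmul_eq_mul, Nat.cast_pred m.pos]
          ring

/-- The output distribution induced by the input distribution `Q`. -/
noncomputable def outDist {X Y : Type*} [Fintype X] (W : X → Y → ℝ) (Q : X → ℝ) (y : Y) : ℝ :=
  ∑ x, Q x * W x y

/-- The `Q`-probability of the inputs from which the output `y` can be reached. -/
noncomputable def reachProb {X Y : Type*} [Fintype X] (W : X → Y → ℝ) (Q : X → ℝ) (y : Y) : ℝ :=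
  ∑ x, Q x * if 0 < W x y then (1 : ℝ) else 0

theorem sum_prod_mul_Wn {X Y : Type*} [Fintype X] (W : X → Y → ℝ) (Q : X → ℝ) {N : ℕ}
    (y : Fin N → Y) :
    ∑ x : Fin N → X, (∏ n, Q (x n)) * Wn W x y = ∏ n, outDist W Q (y n) := by
  simp only [outDist, Wn, ← Finset.prod_mul_distrib]
  exact (Fintype.prod_sum fun n x => Q x * W x (y n)).symm

section Channel

variable {X Y : Type*} [Fintype X] [Fintype Y] {W : X → Y → ℝ} {Q : X → ℝ}

theorem isDist_outDist (hW : IsChannel W) (hQ : IsDist Q) : IsDist (outDist W Q) := by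
  refine ⟨fun y => Finset.sum_nonneg fun x _ => mul_nonneg (hQ.1 x) (hW.1 x y), ?_⟩
  simp only [outDist]
  rw [Finset.sum_comm]
  simp only [← Finset.mul_sum, hW.2, mul_one, hQ.2]

theorem sum_prod_mul_Wn_pos (hW : IsChannel W) (Q : X → ℝ) {N : ℕ} (y : Fin N → Y) :
    ∑ x : Fin N → X, (∏ n, Q (x n)) * (if 0 < Wn W x y then (1 : ℝ) else 0) =
      ∏ n, reachProb W Q (y n) := by
  have h : ∀ x : Fin N → X, (if 0 < Wn W x y then (1 : ℝ) else 0) =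
      ∏ n, if 0 < W (x n) (y n) then (1 : ℝ) else 0 := by
    intro x
    rw [Finset.prod_ite_zero]
    simp only [Finset.prod_const_one, Finset.mem_univ, true_imp_iff]
    refine if_congr ⟨fun h n => ?_, fun h => Finset.prod_pos fun n _ => h n⟩ rfl rfl
    exact (hW.1 _ _).lt_of_ne' fun h0 => h.ne' (Finset.prod_eq_zero (Finset.mem_univ n) h0)
  simp only [reachProb, h, ← Finset.prod_mul_distrib]
  exact (Fintype.prod_sum fun n x => Q x * if 0 < W x (y n) then (1 : ℝ) else 0).symm

theorem Pbar_le (hW : IsChannel W) (hQ : IsDist Q) (N : ℕ) (R : ℝ) :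
    Pbar W Q N R ≤ ∑ y : Fin N → Y, (∏ n, outDist W Q (y n)) *
      min 1 (Real.exp (N * R) * ∏ n, reachProb W Q (y n)) := by
  have hM : (nMsgs N R : ℝ) - 1 ≤ Real.exp (N * R) := by
    have := Nat.ceil_lt_add_one (Real.exp_pos (N * R)).le
    simp only [nMsgs]
    linarith
  have hM0 : 0 < (nMsgs N R : ℝ) := by
    exact_mod_cast Nat.ceil_pos.mpr (Real.exp_pos (N * R))
  set B : ℝ := ∑ y : Fin N → Y, (∏ n, outDist W Q (y n)) *
      min 1 (Real.exp (N * R) * ∏ n, reachProb W Q (y n))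
  have hQN := isDist_prod hQ N
  have hterm : ∀ (m : Fin (nMsgs N R)) (y : Fin N → Y),
      ∑ c : Fin (nMsgs N R) → Fin N → X, (∏ m, ∏ n, Q (c m n)) * (Wn W (c m) y *
          (if ∃ m', m' ≠ m ∧ Wn W (c m) y ≤ Wn W (c m') y then (1 : ℝ) else 0)) ≤
        (∏ n, outDist W Q (y n)) *
          min 1 (Real.exp (N * R) * ∏ n, reachProb W Q (y n)) := by
    intro m y
    refine (sum_prod_mul_error_le hQN (w := fun x => Wn W x y)
      (fun x => Finset.prod_nonneg fun n _ => hW.1 _ _) m).trans ?_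
    rw [sum_prod_mul_Wn, sum_prod_mul_Wn_pos hW]
    refine mul_le_mul_of_nonneg_left (min_le_min_left _ (mul_le_mul_of_nonneg_right hM ?_))
      (Finset.prod_nonneg fun n _ => (isDist_outDist hW hQ).1 _)
    exact Finset.prod_nonneg fun n _ => Finset.sum_nonneg fun x _ =>
      mul_nonneg (hQ.1 x) (by split_ifs <;> norm_num)
  have hswap : Pbar W Q N R = (nMsgs N R : ℝ)⁻¹ * ∑ m, ∑ y : Fin N → Y,
      ∑ c : Fin (nMsgs N R) → Fin N → X, (∏ m, ∏ n, Q (c m n)) * (Wn W (c m) y *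
          (if ∃ m', m' ≠ m ∧ Wn W (c m) y ≤ Wn W (c m') y then (1 : ℝ) else 0)) := by
    rw [Pbar, Finset.mul_sum]
    simp only [Finset.mul_sum]
    rw [Finset.sum_comm]
    refine Finset.sum_congr rfl fun m _ => ?_
    rw [Finset.sum_comm]
    exact Finset.sum_congr rfl fun y _ => Finset.sum_congr rfl fun c _ => by ring
  calc Pbar W Q N R ≤ (nMsgs N R : ℝ)⁻¹ * ∑ _m : Fin (nMsgs N R), B := by
        rw [hswap]
        exact mul_le_mul_of_nonneg_left (Finset.sum_le_sum fun m _ =>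
          Finset.sum_le_sum fun y _ => hterm m y) (inv_nonneg.mpr hM0.le)
    _ = B := by
        rw [Finset.sum_const, Finset.card_univ, Fintype.card_fin, nsmul_eq_mul]
        field_simp

theorem reachProb_pos (hW : IsChannel W) (hQ : IsDist Q) {y : Y} (hy : 0 < outDist W Q y) :
    0 < reachProb W Q y := by
  obtain ⟨x, -, hx⟩ := Finset.exists_ne_zero_of_sum_ne_zero hy.ne'
  have hQx : 0 < Q x := (hQ.1 x).lt_of_ne' (left_ne_zero_of_mul hx)
  have hWx : 0 < W x y := (hW.1 x y).lt_of_ne' (right_ne_zero_of_mul hx)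
  refine Finset.sum_pos' (fun x _ => mul_nonneg (hQ.1 x) (by split_ifs <;> norm_num))
    ⟨x, Finset.mem_univ x, ?_⟩
  rw [if_pos hWx, mul_one]
  exact hQx

/-- For a singular pair, all inputs of positive probability from which `y` can be reached have
the same transition probability to `y`. -/
theorem Singular.exists_eq_ite (hsing : Singular W Q) (hW : IsChannel W) (hQ : IsDist Q) {y : Y}
    (hy : 0 < outDist W Q y) :
    ∃ w : ℝ, 0 < w ∧ (∀ x, 0 < Q x → W x y = if 0 < W x y then w else 0) ∧
      outDist W Q y = reachProb W Q y * w := by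
  obtain ⟨x₀, -, hx⟩ := Finset.exists_ne_zero_of_sum_ne_zero hy.ne'
  have hQx : 0 < Q x₀ := (hQ.1 x₀).lt_of_ne' (left_ne_zero_of_mul hx)
  have hWx : 0 < W x₀ y := (hW.1 x₀ y).lt_of_ne' (right_ne_zero_of_mul hx)
  have hite : ∀ x, 0 < Q x → W x y = if 0 < W x y then W x₀ y else 0 := by
    intro x hx
    split_ifs with h
    · exact hsing x y x₀ (by positivity)
    · exact le_antisymm (not_lt.mp h) (hW.1 x y)
  refine ⟨W x₀ y, hWx, hite, ?_⟩
  rw [outDist, reachProb, Finset.sum_mul]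
  refine Finset.sum_congr rfl fun x _ => ?_
  rcases (hQ.1 x).eq_or_lt with h | h
  · simp [← h]
  · by_cases h' : 0 < W x y
    · rw [if_pos h', mul_one, show W x y = W x₀ y by rw [hite x h, if_pos h']]
    · rw [if_neg h', show W x y = 0 by rw [hite x h, if_neg h'],
        mul_zero, zero_mul]

/-- The information density of a singular pair as a function of the output. -/
noncomputable def infoDensity (W : X → Y → ℝ) (Q : X → ℝ) (y : Y) : ℝ :=
  -Real.log (reachProb W Q y)

theorem exp_neg_mul_infoDensity (hW : IsChannel W) (hQ : IsDist Q) {y : Y}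
    (hy : 0 < outDist W Q y) (ρ : ℝ) :
    Real.exp (-ρ * infoDensity W Q y) = reachProb W Q y ^ ρ := by
  rw [Real.rpow_def_of_pos (reachProb_pos hW hQ hy), infoDensity]
  ring_nf

theorem mul_eq_zero_of_outDist_eq_zero (hW : IsChannel W) (hQ : IsDist Q) {y : Y}
    (hy : outDist W Q y = 0) (x : X) : Q x * W x y = 0 :=
  (Finset.sum_eq_zero_iff_of_nonneg fun x _ => mul_nonneg (hQ.1 x) (hW.1 x y)).mp hy x
    (Finset.mem_univ x)

theorem Singular.Eo_eq (hsing : Singular W Q) (hW : IsChannel W) (hQ : IsDist Q) {ρ : ℝ}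
    (hρ : -1 < ρ) :
    Eo W ρ Q = -Real.log (∑ y, outDist W Q y * Real.exp (-ρ * infoDensity W Q y)) := by
  have hρ0 : 0 < 1 + ρ := by linarith
  have hs : 1 / (1 + ρ) ≠ 0 := (one_div_pos.mpr hρ0).ne'
  rw [Eo]
  congr 2
  refine Finset.sum_congr rfl fun y _ => ?_
  rcases ((isDist_outDist hW hQ).1 y).eq_or_lt with hy | hy
  · have h0 : ∀ x, Q x * W x y ^ (1 / (1 + ρ)) = 0 := by
      intro x
      rcases mul_eq_zero.mp (mul_eq_zero_of_outDist_eq_zero hW hQ hy.symm x) with h | h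
      · simp [h]
      · rw [h, Real.zero_rpow hs, mul_zero]
    rw [← hy, zero_mul, Finset.sum_eq_zero fun x _ => h0 x, Real.zero_rpow hρ0.ne']
  · obtain ⟨w, hw, hite, hout⟩ := hsing.exists_eq_ite hW hQ hy
    have hq := reachProb_pos hW hQ hy
    have hsum : ∑ x, Q x * W x y ^ (1 / (1 + ρ)) = reachProb W Q y * w ^ (1 / (1 + ρ)) := by
      rw [reachProb, Finset.sum_mul]
      refine Finset.sum_congr rfl fun x _ => ?_
      rcases (hQ.1 x).eq_or_lt with h | h
      · simp [← h]
      · rw [mul_assoc]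
        congr 1
        rw [hite x h]
        by_cases h' : 0 < W x y
        · simp [h', hw]
        · simp only [h', if_false, lt_irrefl, zero_mul]
          exact Real.zero_rpow hs
    rw [hsum, exp_neg_mul_infoDensity hW hQ hy, hout, Real.mul_rpow hq.le (by positivity),
      ← Real.rpow_mul hw.le, one_div_mul_cancel hρ0.ne', Real.rpow_one, Real.rpow_add hq,
      Real.rpow_one]
    ring

theorem Singular.MI_eq (hsing : Singular W Q) (hW : IsChannel W) (hQ : IsDist Q) :
    MI W Q = ∑ y, outDist W Q y * infoDensity W Q y := by
  rw [MI, Finset.sum_comm]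
  refine Finset.sum_congr rfl fun y _ => ?_
  rcases ((isDist_outDist hW hQ).1 y).eq_or_lt with hy | hy
  · rw [← hy, zero_mul]
    exact Finset.sum_eq_zero fun x _ => by
      rw [mul_eq_zero_of_outDist_eq_zero hW hQ hy.symm x, zero_mul]
  · obtain ⟨w, hw, hite, hout⟩ := hsing.exists_eq_ite hW hQ hy
    have hq := reachProb_pos hW hQ hy
    rw [outDist, Finset.sum_mul]
    refine Finset.sum_congr rfl fun x _ => ?_
    rcases (hQ.1 x).eq_or_lt with h | h
    · simp [← h]
    · by_cases h' : 0 < W x y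
      · have hWx : W x y = w := by rw [hite x h, if_pos h']
        congr 1
        rw [show ∑ x', Q x' * W x' y = reachProb W Q y * w from hout, hWx, infoDensity,
          ← Real.log_inv]
        congr 1
        field_simp
      · have hWx : W x y = 0 := by rw [hite x h, if_neg h']
        simp [hWx]

end Channel

section Tilting

variable {Y : Type*} [Fintype Y] {P : Y → ℝ}

theorem IsDist.sum_mul_exp_pos (hP : IsDist P) (f : Y → ℝ) : 0 < ∑ y, P y * Real.exp (f y) := by
  obtain ⟨y, -, hy⟩ := Finset.exists_ne_zero_of_sum_ne_zero (hP.2.trans_ne one_ne_zero)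
  exact Finset.sum_pos' (fun y _ => mul_nonneg (hP.1 y) (Real.exp_pos _).le)
    ⟨y, Finset.mem_univ y, mul_pos ((hP.1 y).lt_of_ne' hy) (Real.exp_pos _)⟩

theorem IsDist.hasDerivAt_neg_log_sum (hP : IsDist P) (z : Y → ℝ) (ρ : ℝ) :
    HasDerivAt (fun ρ => -Real.log (∑ y, P y * Real.exp (-ρ * z y)))
      ((∑ y, P y * (Real.exp (-ρ * z y) * z y)) / ∑ y, P y * Real.exp (-ρ * z y)) ρ := by
  have h : HasDerivAt (fun ρ => ∑ y, P y * Real.exp (-ρ * z y))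
      (∑ y, P y * (Real.exp (-ρ * z y) * (-1 * z y))) ρ :=
    HasDerivAt.fun_sum fun y _ =>
      (((hasDerivAt_id ρ).neg.mul_const (z y)).exp).const_mul (P y)
  refine (h.log (hP.sum_mul_exp_pos _).ne').neg.congr_deriv ?_
  simp only [neg_one_mul, mul_neg, Finset.sum_neg_distrib, neg_div, neg_neg]

end Tilting

/-- A differentiable function on `[0, 1]` which increases at `0` and decreases at `1` attains its
maximum in the interior. -/
theorem exists_isMaxOn_Ioo {f : ℝ → ℝ} {f' : ℝ → ℝ} (hf : ∀ x, HasDerivAt f (f' x) x)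
    (h0 : 0 < f' 0) (h1 : f' 1 < 0) :
    ∃ x ∈ Set.Ioo (0 : ℝ) 1, IsMaxOn f (Set.Icc 0 1) x := by
  obtain ⟨x, hx, hmax⟩ := isCompact_Icc.exists_isMaxOn (Set.nonempty_Icc.mpr zero_le_one)
    (fun x _ => (hf x).continuousAt.continuousWithinAt : ContinuousOn f (Set.Icc (0 : ℝ) 1))
  refine ⟨x, ⟨hx.1.lt_of_ne ?_, hx.2.lt_of_ne ?_⟩, hmax⟩
  · rintro rfl
    have := hmax.localize.hasFDerivWithinAt_nonpos (hf 0).hasFDerivAt.hasFDerivWithinAt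
      (mem_posTangentConeAt_of_segment_subset (y := 1) (by simp [segment_eq_Icc]))
    simp at this
    linarith
  · rintro rfl
    have := hmax.localize.hasFDerivWithinAt_nonpos (hf 1).hasFDerivAt.hasFDerivWithinAt
      (mem_posTangentConeAt_of_segment_subset (y := -1) (by
        rw [segment_symm]; simp [segment_eq_Icc]))
    simp at this
    linarith

theorem min_one_exp_neg_le {ρ η : ℝ} (h1 : η ≤ ρ) (h2 : η ≤ 1 - ρ) (t : ℝ) :
    min 1 (Real.exp (-t)) ≤ Real.exp (-ρ * t) * Real.exp (-η * |t|) := by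
  rw [← Real.exp_add]
  rcases le_total 0 t with ht | ht
  · refine (min_le_right _ _).trans (Real.exp_le_exp.mpr ?_)
    rw [abs_of_nonneg ht]
    nlinarith
  · refine (min_le_left _ _).trans (Real.one_le_exp ?_)
    rw [abs_of_nonpos ht]
    nlinarith

/-- Refined random coding bound, singular case: ensemble average error
probability is at most `K₁ / √N · exp(-N E_r(R,Q))`. -/
theorem statement0 {X Y : Type*} [Fintype X] [Fintype Y] [Nonempty X] [Nonempty Y]
    (W : X → Y → ℝ) (hW : IsChannel W) (hcr : Rcr W < Capacity W)
    (Q : X → ℝ) (hQ : IsDist Q) (R : ℝ) (hR : 0 < R)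
    (hsing : Singular W Q) (hR1 : RcrQ W Q < R) (hR2 : R < MI W Q) :
    ∃ K : ℝ, 0 < K ∧ ∀ N : ℕ, 0 < N →
      Pbar W Q N R ≤ K / Real.sqrt N * Real.exp (-(N : ℝ) * ErQ W R Q) := by
  set P := outDist W Q with hP_def
  set z := infoDensity W Q with hz_def
  have hP : IsDist P := isDist_outDist hW hQ
  set f : ℝ → ℝ := fun ρ => -Real.log (∑ y, P y * Real.exp (-ρ * z y)) with hf_def
  set f' : ℝ → ℝ := fun ρ =>
    (∑ y, P y * (Real.exp (-ρ * z y) * z y)) / ∑ y, P y * Real.exp (-ρ * z y) with hf'_def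
  have hf : ∀ ρ, HasDerivAt f (f' ρ) ρ := hP.hasDerivAt_neg_log_sum z
  have hMI : MI W Q = f' 0 := by
    rw [hsing.MI_eq hW hQ, hf'_def]
    simp only [neg_zero, zero_mul, Real.exp_zero, one_mul, mul_one, hP.2, div_one]
    rfl
  have hRcr : RcrQ W Q = f' 1 := by
    rw [RcrQ, ← (hf 1).deriv]
    refine Filter.EventuallyEq.deriv_eq ?_
    filter_upwards [lt_mem_nhds (show (-1 : ℝ) < 1 by norm_num)] with ρ hρ
    exact hsing.Eo_eq hW hQ hρ
  rw [hRcr] at hR1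
  rw [hMI] at hR2
  obtain ⟨a, b, ha, hb, hab⟩ : ∃ a b, 0 < P a ∧ 0 < P b ∧ z a ≠ z b := by
    by_contra! hcon
    obtain ⟨b, -, hb⟩ := Finset.exists_ne_zero_of_sum_ne_zero (hP.2.trans_ne one_ne_zero)
    have hb' : 0 < P b := (hP.1 b).lt_of_ne' hb
    have hconst : ∀ ρ, f' ρ = z b := by
      intro ρ
      rw [hf'_def, div_eq_iff (hP.sum_mul_exp_pos _).ne', Finset.mul_sum]
      refine Finset.sum_congr rfl fun y _ => ?_
      rcases (hP.1 y).eq_or_lt with hy | hy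
      · simp [← hy]
      · rw [hcon y b hy hb']
        ring
    rw [hconst] at hR1 hR2
    linarith
  obtain ⟨ρ, ⟨hρ0, hρ1⟩, hmax⟩ := exists_isMaxOn_Ioo (f := fun ρ => -ρ * R + f ρ)
    (f' := fun ρ => -1 * R + f' ρ) (fun ρ => ((hasDerivAt_id ρ).neg.mul_const R).add (hf ρ))
    (by linarith) (by linarith)
  have hEr : ErQ W R Q ≤ -ρ * R + f ρ := by
    refine csSup_le ((Set.nonempty_Icc.mpr zero_le_one).image _) ?_
    rintro _ ⟨s, hs, rfl⟩
    simp only [hsing.Eo_eq hW hQ (show -1 < s by linarith [hs.1])]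
    exact hmax hs
  set G := ∑ y, P y * Real.exp (-ρ * z y) with hG_def
  have hG : 0 < G := hP.sum_mul_exp_pos _
  have hp : IsDist fun y => P y * Real.exp (-ρ * z y) / G :=
    ⟨fun y => div_nonneg (mul_nonneg (hP.1 y) (Real.exp_pos _).le) hG.le, by
      rw [← Finset.sum_div, div_self hG.ne']⟩
  obtain ⟨K, hK, hbound⟩ := exists_sum_exp_neg_abs_le hp z (a := a) (b := b)
    (by positivity) (by positivity) hab (η := min ρ (1 - ρ)) (lt_min hρ0 (by linarith))
  refine ⟨K, hK, fun N hN => ?_⟩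
  have hpt : ∀ ω : Fin N → Y,
      (∏ n, P (ω n)) * min 1 (Real.exp (N * R) * ∏ n, reachProb W Q (ω n)) ≤
        G ^ N * Real.exp (ρ * (N * R)) * ((∏ n, P (ω n) * Real.exp (-ρ * z (ω n)) / G) *
          Real.exp (-min ρ (1 - ρ) * |∑ n, z (ω n) - N * R|)) := by
    intro ω
    by_cases h0 : ∃ n, P (ω n) = 0
    · obtain ⟨n, hn⟩ := h0
      rw [Finset.prod_eq_zero (Finset.mem_univ n) hn, zero_mul]
      have := (isDist_prod hp N).1 ω
      positivity
    · push Not at h0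
      have hq : ∏ n, reachProb W Q (ω n) = Real.exp (-∑ n, z (ω n)) := by
        rw [← Finset.sum_neg_distrib, Real.exp_sum]
        refine Finset.prod_congr rfl fun n _ => ?_
        rw [hz_def, infoDensity, neg_neg,
          Real.exp_log (reachProb_pos hW hQ ((hP.1 _).lt_of_ne' (h0 n)))]
      have htilt : G ^ N * ∏ n, P (ω n) * Real.exp (-ρ * z (ω n)) / G =
          (∏ n, P (ω n)) * Real.exp (-ρ * ∑ n, z (ω n)) := by
        rw [Finset.prod_div_distrib, Finset.prod_mul_distrib, ← Real.exp_sum, ← Finset.mul_sum,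
          Finset.prod_const, Finset.card_univ, Fintype.card_fin]
        field_simp
      have hmin := min_one_exp_neg_le (min_le_left ρ (1 - ρ)) (min_le_right ρ (1 - ρ))
        (∑ n, z (ω n) - N * R)
      rw [hq, ← Real.exp_add]
      calc (∏ n, P (ω n)) * min 1 (Real.exp (N * R + -∑ n, z (ω n)))
          ≤ (∏ n, P (ω n)) * (Real.exp (-ρ * (∑ n, z (ω n) - N * R)) *
              Real.exp (-min ρ (1 - ρ) * |∑ n, z (ω n) - N * R|)) := by
            refine mul_le_mul_of_nonneg_left ?_ (Finset.prod_nonneg fun n _ => hP.1 _)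
            rwa [show (N : ℝ) * R + -∑ n, z (ω n) = -(∑ n, z (ω n) - N * R) by ring]
        _ = (∏ n, P (ω n)) * Real.exp (-ρ * ∑ n, z (ω n)) * Real.exp (ρ * (N * R)) *
              Real.exp (-min ρ (1 - ρ) * |∑ n, z (ω n) - N * R|) := by
            rw [show -ρ * (∑ n, z (ω n) - N * R) = -ρ * ∑ n, z (ω n) + ρ * (N * R) by ring,
              Real.exp_add]
            ring
        _ = _ := by
            rw [← htilt]
            ring
  have hexponent : G ^ N * Real.exp (ρ * (N * R)) ≤ Real.exp (-(N : ℝ) * ErQ W R Q) := by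
    have hGN : G ^ N = Real.exp (N * Real.log G) := by
      rw [Real.exp_nat_mul, Real.exp_log hG]
    rw [hGN, ← Real.exp_add, Real.exp_le_exp]
    have h := mul_le_mul_of_nonneg_left hEr (Nat.cast_nonneg (α := ℝ) N)
    simp only [hf_def, ← hG_def] at h
    linarith
  calc Pbar W Q N R ≤ ∑ ω : Fin N → Y, (∏ n, P (ω n)) *
        min 1 (Real.exp (N * R) * ∏ n, reachProb W Q (ω n)) := Pbar_le hW hQ N R
    _ ≤ G ^ N * Real.exp (ρ * (N * R)) *
        ∑ ω : Fin N → Y, (∏ n, P (ω n) * Real.exp (-ρ * z (ω n)) / G) *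
          Real.exp (-min ρ (1 - ρ) * |∑ n, z (ω n) - N * R|) := by
        rw [Finset.mul_sum]
        exact Finset.sum_le_sum fun ω _ => hpt ω
    _ ≤ Real.exp (-(N : ℝ) * ErQ W R Q) * (K / Real.sqrt N) :=
        mul_le_mul hexponent (hbound N hN _) (Finset.sum_nonneg fun ω _ =>
          mul_nonneg ((isDist_prod hp N).1 ω) (Real.exp_pos _).le) (Real.exp_pos _).le
    _ = K / Real.sqrt N * Real.exp (-(N : ℝ) * ErQ W R Q) := mul_comm _ _

end RCB
end

section
/- Let W be a discrete memoryless channel with R_cr < C, and suppose Q ∈ P(𝒳) and R > 0 are such that the pair (Q,W) is nonsingular and R_cr(Q) < R < I(Q;W). Let ρ*_R(Q) := −∂E_r(a,Q)/∂a evaluated at a = R. Then there exists a constant K₂ > 0, depending only on W, R and Q, such that for every positive integer N the ensemble average error probability satisfies P̄_e(Q,N,R) ≤ K₂ · N^{−(1+ρ*_R(Q))/2} · e^{−N·E_r(R,Q)}. -/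
open Real BigOperators
open scoped Classical

namespace RCB

theorem centralBinom_sq_mul_le (n : ℕ) : n.centralBinom ^ 2 * (2 * n + 1) ≤ 16 ^ n := by
  induction n with
  | zero => simp
  | succ n ih =>
    have h := Nat.succ_mul_centralBinom_succ n
    refine Nat.le_of_mul_le_mul_left (c := (n + 1) ^ 2) ?_ (by positivity)
    calc (n + 1) ^ 2 * ((n + 1).centralBinom ^ 2 * (2 * (n + 1) + 1))
        = ((n + 1) * (n + 1).centralBinom) ^ 2 * (2 * n + 3) := by ring
      _ = (n.centralBinom ^ 2 * (2 * n + 1)) * (4 * (2 * n + 1) * (2 * n + 3)) := by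
          rw [h]; ring
      _ ≤ 16 ^ n * (16 * (n + 1) ^ 2) := by
          refine Nat.mul_le_mul ih ?_
          nlinarith
      _ = (n + 1) ^ 2 * 16 ^ (n + 1) := by ring

theorem choose_sq_mul_le (j i : ℕ) : j.choose i ^ 2 * (j + 1) ≤ 4 ^ j := by
  have hmid : j.choose i ^ 2 * (j + 1) ≤ j.choose (j / 2) ^ 2 * (j + 1) := by
    gcongr
    exact Nat.choose_le_middle i j
  refine hmid.trans ?_
  obtain ⟨n, rfl | rfl⟩ := j.even_or_odd'
  · have h := centralBinom_sq_mul_le n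
    rw [Nat.mul_div_cancel_left _ (by norm_num : 0 < 2), pow_mul]
    exact h
  · have h := centralBinom_sq_mul_le (n + 1)
    have h2 : (n + 1).centralBinom = 2 * (2 * n + 1).choose n := by
      rw [Nat.centralBinom, show 2 * (n + 1) = (2 * n + 1) + 1 by ring, Nat.choose_succ_succ,
        Nat.choose_symm_half]
      ring
    rw [h2] at h
    have h3 : (2 * n + 1) / 2 = n := by omega
    have h4 : 4 ^ (2 * n + 1) = 4 * 16 ^ n := by rw [pow_succ, pow_mul]; norm_num; ring
    rw [h3, h4]
    rw [pow_succ 16 n] at h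
    nlinarith

theorem choose_div_two_pow_le (j i : ℕ) :
    (j.choose i : ℝ) / 2 ^ j ≤ ((j : ℝ) + 1) ^ (-(1 / 2) : ℝ) := by
  have h : (j.choose i : ℝ) ^ 2 * (j + 1) ≤ 4 ^ j := by exact_mod_cast choose_sq_mul_le j i
  have hj : (0 : ℝ) < (j : ℝ) + 1 := by positivity
  rw [Real.rpow_neg hj.le, ← Real.sqrt_eq_rpow, div_le_iff₀ (by positivity), ← div_eq_inv_mul,
    le_div_iff₀ (by positivity)]
  refine le_of_sq_le_sq ?_ (by positivity)
  rw [mul_pow, Real.sq_sqrt hj.le]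
  calc _ ≤ (4 : ℝ) ^ j := h
    _ = _ := by rw [← pow_mul, mul_comm, pow_mul]; norm_num

/-- One step of the averaging recursion for negative moments of a binomial variable. -/
theorem rpow_neg_mix_le {p u β : ℝ} (hp0 : 0 ≤ p) (hp1 : p ≤ 1) (hu : 1 ≤ u) (hβ0 : 0 ≤ β)
    (hβ1 : β ≤ 1) :
    p * (u + 1) ^ (-β) + (1 - p) * u ^ (-β) ≤ (u + p / 2) ^ (-β) := by
  have hu0 : 0 < u := by linarith
  have key := (Real.concaveOn_rpow hβ0 hβ1).2 (x := (u + 1)⁻¹) (y := u⁻¹)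
    (Set.mem_Ici.2 (by positivity)) (Set.mem_Ici.2 (by positivity)) hp0 (sub_nonneg.2 hp1)
    (by ring)
  simp only [smul_eq_mul] at key
  have hle : p * (u + 1)⁻¹ + (1 - p) * u⁻¹ ≤ (u + p / 2)⁻¹ := by
    rw [← sub_nonneg]
    have : (u + p / 2)⁻¹ - (p * (u + 1)⁻¹ + (1 - p) * u⁻¹)
        = (p / 2 * (u - 1) + p ^ 2 / 2) / ((u + p / 2) * (u + 1) * u) := by
      field_simp
      ring
    rw [this]
    have : 0 ≤ p / 2 * (u - 1) := mul_nonneg (by positivity) (by linarith)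
    positivity
  rw [Real.rpow_neg (by positivity), Real.rpow_neg (by positivity), Real.rpow_neg (by positivity),
    ← Real.inv_rpow (by positivity), ← Real.inv_rpow (by positivity),
    ← Real.inv_rpow (by positivity)]
  refine key.trans (Real.rpow_le_rpow ?_ hle hβ0)
  have := sub_nonneg.2 hp1
  positivity

theorem sum_pi_fin_succ {α : Type*} [Fintype α] {N : ℕ} (F : (Fin (N + 1) → α) → ℝ) :
    ∑ x, F x = ∑ a, ∑ x : Fin N → α, F (Fin.cons a x) := by
  rw [← (Fin.consEquiv (fun _ : Fin (N + 1) => α)).sum_comp, Fintype.sum_prod_type]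
  rfl

/-- The sum of a two-sided exponential along an arithmetic progression is bounded. -/
theorem sum_exp_neg_abs_le {κ δ : ℝ} (hκ : 0 < κ) (hδ : 0 < δ) (a : ℝ) (n : ℕ) :
    ∑ i ∈ Finset.range n, Real.exp (-κ * |a + δ * i|) ≤ 2 / (1 - Real.exp (-κ * δ)) := by
  set r := Real.exp (-κ * δ) with hr
  have hr1 : r < 1 := by
    rw [hr, Real.exp_lt_one_iff]; nlinarith [mul_pos hκ hδ]
  have hr0 : 0 < r := Real.exp_pos _
  let ψ : ℝ → ℝ := fun t => if t < 0 then Real.exp (κ * t) else 2 - Real.exp (-κ * t)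
  have hψ0 : ∀ t, 0 ≤ ψ t := by
    intro t
    simp only [ψ]
    split_ifs with h
    · positivity
    · have : Real.exp (-κ * t) ≤ 1 := by
        rw [Real.exp_le_one_iff]; nlinarith
      linarith
  have hψ2 : ∀ t, ψ t ≤ 2 := by
    intro t
    simp only [ψ]
    split_ifs with h
    · have : Real.exp (κ * t) ≤ 1 := by
        rw [Real.exp_le_one_iff]; nlinarith
      linarith
    · linarith [Real.exp_pos (-κ * t)]
  have hstep : ∀ t, (1 - r) * Real.exp (-κ * |t|) ≤ ψ (t + δ) - ψ t := by
    intro t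
    simp only [ψ]
    by_cases h : t < 0
    · rw [if_pos h, abs_of_neg h, show -κ * -t = κ * t by ring]
      set e := Real.exp (κ * t) with he
      have he0 : 0 < e := Real.exp_pos _
      by_cases h2 : t + δ < 0
      · rw [if_pos h2]
        have h3 : r * Real.exp (κ * (t + δ)) = e := by
          rw [hr, he, ← Real.exp_add]; ring_nf
        have h4 : Real.exp (κ * (t + δ)) ≥ e := by
          rw [← h3]; nlinarith [Real.exp_pos (κ * (t + δ))]
        nlinarith
      · rw [if_neg h2]
        have he1 : e ≤ 1 := by
          rw [he, Real.exp_le_one_iff]; nlinarith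
        have h3 : e * Real.exp (-κ * (t + δ)) = r := by
          rw [hr, he, ← Real.exp_add]; ring_nf
        have her : r ≤ e := by
          rw [hr, he, Real.exp_le_exp]; nlinarith
        have h4 : 0 ≤ (1 - e) * (2 * e - r * (1 + e)) :=
          mul_nonneg (by linarith) (by nlinarith)
        refine le_of_mul_le_mul_left ?_ he0
        nlinarith
    · have h2 : ¬ t + δ < 0 := by push Not at h ⊢; linarith
      rw [if_neg h, if_neg h2, abs_of_nonneg (not_lt.1 h)]
      have h3 : Real.exp (-κ * (t + δ)) = r * Real.exp (-κ * t) := by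
        rw [hr, ← Real.exp_add]; ring_nf
      rw [h3]
      linarith
  rw [le_div_iff₀ (by linarith), mul_comm, Finset.mul_sum]
  calc ∑ i ∈ Finset.range n, (1 - r) * Real.exp (-κ * |a + δ * i|)
      ≤ ∑ i ∈ Finset.range n, (ψ (a + δ * ((i + 1 : ℕ) : ℝ)) - ψ (a + δ * (i : ℝ))) := by
        refine Finset.sum_le_sum fun i _ => ?_
        rw [show a + δ * ((i + 1 : ℕ) : ℝ) = a + δ * i + δ by push_cast; ring]
        exact hstep _
    _ = ψ (a + δ * (n : ℝ)) - ψ (a + δ * ((0 : ℕ) : ℝ)) :=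
        Finset.sum_range_sub (fun i : ℕ => ψ (a + δ * (i : ℝ))) n
    _ ≤ 2 := by linarith [hψ2 (a + δ * (n : ℝ)), hψ0 (a + δ * ((0 : ℕ) : ℝ))]

/-- The average of `f` over `a + δ J` with `J` binomial with parameters `j` and `1 / 2`. -/
noncomputable def binAvg (f : ℝ → ℝ) (δ : ℝ) (j : ℕ) (a : ℝ) : ℝ :=
  ∑ i ∈ Finset.range (j + 1), (j.choose i : ℝ) / 2 ^ j * f (a + δ * i)

theorem binAvg_zero (f : ℝ → ℝ) (δ a : ℝ) : binAvg f δ 0 a = f a := by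
  simp [binAvg]

theorem binAvg_succ (f : ℝ → ℝ) (δ : ℝ) (j : ℕ) (a : ℝ) :
    binAvg f δ (j + 1) a = (binAvg f δ j a + binAvg f δ j (a + δ)) / 2 := by
  have h := Finset.sum_choose_succ_mul (fun i _ => f (a + δ * (i : ℕ))) j
  simp only [binAvg, div_mul_eq_mul_div, ← Finset.sum_div]
  rw [h, pow_succ, ← add_div, div_div]
  congr 2
  refine Finset.sum_congr rfl fun i _ => ?_
  push_cast
  ring_nf

theorem binAvg_le {f : ℝ → ℝ} {δ B : ℝ} (hf : ∀ t, 0 ≤ f t)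
    (hB : ∀ a n, ∑ i ∈ Finset.range n, f (a + δ * i) ≤ B) (j : ℕ) (a : ℝ) :
    binAvg f δ j a ≤ B * ((j : ℝ) + 1) ^ (-(1 / 2) : ℝ) := by
  calc binAvg f δ j a
      ≤ ∑ i ∈ Finset.range (j + 1), ((j : ℝ) + 1) ^ (-(1 / 2) : ℝ) * f (a + δ * i) :=
        Finset.sum_le_sum fun i _ =>
          mul_le_mul_of_nonneg_right (choose_div_two_pow_le j i) (hf _)
    _ = (∑ i ∈ Finset.range (j + 1), f (a + δ * i)) * ((j : ℝ) + 1) ^ (-(1 / 2) : ℝ) := by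
        rw [← Finset.mul_sum, mul_comm]
    _ ≤ _ := mul_le_mul_of_nonneg_right (hB a (j + 1)) (by positivity)

/-- The number of occurrences of the letter `b` in the word `y`. -/
noncomputable def occ {Y : Type*} (b : Y) {N : ℕ} (y : Fin N → Y) : ℝ :=
  ∑ n, if y n = b then (1 : ℝ) else 0

theorem occ_nonneg {Y : Type*} (b : Y) {N : ℕ} (y : Fin N → Y) : 0 ≤ occ b y :=
  Finset.sum_nonneg fun n (_ : n ∈ Finset.univ) => by split_ifs <;> norm_num

theorem occ_cons {Y : Type*} (b c : Y) {N : ℕ} (y : Fin N → Y) :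
    occ b (Fin.cons c y : Fin (N + 1) → Y) = (if c = b then 1 else 0) + occ b y := by
  simp only [occ, Fin.sum_univ_succ, Fin.cons_zero, Fin.cons_succ]

theorem binAvg_anticoncentration {X Y : Type*} [Fintype X] {V w : Y → X → ℝ} {y₀ : Y}
    {x₁ x₂ : X} {m δ B : ℝ} {f : ℝ → ℝ} (hV : ∀ y x, 0 ≤ V y x) (hV1 : ∀ y, ∑ x, V y x ≤ 1)
    (hx : x₁ ≠ x₂) (hm : 0 ≤ m) (hm1 : m ≤ V y₀ x₁) (hm2 : m ≤ V y₀ x₂)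
    (hw : w y₀ x₂ = w y₀ x₁ + δ) (hf : ∀ t, 0 ≤ f t)
    (hB : ∀ a n, ∑ i ∈ Finset.range n, f (a + δ * i) ≤ B) {N : ℕ} (y : Fin N → Y) (j : ℕ)
    (a : ℝ) :
    ∑ x : Fin N → X, (∏ n, V (y n) (x n)) * binAvg f δ j (∑ n, w (y n) (x n) + a)
      ≤ B * (m * occ y₀ y + j + 1) ^ (-(1 / 2) : ℝ) := by
  have hB0 : 0 ≤ B := by simpa using hB 0 0
  induction N generalizing j a with
  | zero =>
    have := binAvg_le hf hB j a
    simpa [occ] using this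
  | succ N ih =>
    obtain ⟨c, y, rfl⟩ : ∃ c y', y = Fin.cons c y' := ⟨y 0, Fin.tail y, (Fin.cons_self_tail y).symm⟩
    set G : ℕ → ℝ → ℝ := fun j b =>
      ∑ x : Fin N → X, (∏ n, V (y n) (x n)) * binAvg f δ j (∑ n, w (y n) (x n) + b) with hG
    have hsum : ∑ x : Fin (N + 1) → X, (∏ n, V ((Fin.cons c y : Fin (N + 1) → Y) n) (x n)) *
        binAvg f δ j (∑ n, w ((Fin.cons c y : Fin (N + 1) → Y) n) (x n) + a)
        = ∑ z, V c z * G j (w c z + a) := by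
      rw [sum_pi_fin_succ]
      refine Finset.sum_congr rfl fun z _ => ?_
      rw [hG, Finset.mul_sum]
      refine Finset.sum_congr rfl fun x _ => ?_
      simp only [Fin.prod_univ_succ, Fin.sum_univ_succ, Fin.cons_zero, Fin.cons_succ]
      rw [mul_assoc]
      congr 3
      ring
    have ihG : ∀ j b, G j b ≤ B * (m * occ y₀ y + j + 1) ^ (-(1 / 2) : ℝ) :=
      fun j b => ih y j b
    rw [hsum, occ_cons]
    have hocc : 0 ≤ m * occ y₀ y := mul_nonneg hm (occ_nonneg _ _)
    by_cases hc : c = y₀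
    · subst hc
      have hsplit : ∑ z, V c z * G j (w c z + a)
          = ∑ z, (V c z - (if z = x₁ then m else 0) - (if z = x₂ then m else 0)) *
              G j (w c z + a) + 2 * m * G (j + 1) (w c x₁ + a) := by
        have h1 : G (j + 1) (w c x₁ + a) = (G j (w c x₁ + a) + G j (w c x₂ + a)) / 2 := by
          simp only [hG]
          rw [← Finset.sum_add_distrib, Finset.sum_div]
          refine Finset.sum_congr rfl fun x _ => ?_
          rw [binAvg_succ, hw, mul_div_assoc', mul_add]
          ring_nf
        simp only [sub_mul, Finset.sum_sub_distrib, ite_mul, zero_mul, Finset.sum_ite_eq',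
          Finset.mem_univ, if_true]
        rw [h1]
        ring
      have hrest : ∀ z, 0 ≤ V c z - (if z = x₁ then m else 0) - (if z = x₂ then m else 0) := by
        intro z
        by_cases h1 : z = x₁
        · subst h1; simp [hx, hm1]
        · by_cases h2 : z = x₂
          · subst h2; simp [h1, hm2]
          · simp [h1, h2, hV]
      have hrest1 : ∑ z, (V c z - (if z = x₁ then m else 0) - (if z = x₂ then m else 0))
          ≤ 1 - 2 * m := by
        simp only [Finset.sum_sub_distrib, Finset.sum_ite_eq', Finset.mem_univ, if_true]
        linarith [hV1 c]
      have hm12 : 0 ≤ 1 - 2 * m := (Finset.sum_nonneg fun z _ => hrest z).trans hrest1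
      rw [hsplit]
      set u := m * occ c y + j + 1 with hu
      have hu1 : 1 ≤ u := by
        have : (0 : ℝ) ≤ j := Nat.cast_nonneg j
        linarith
      have hmix := rpow_neg_mix_le (p := 2 * m) (u := u) (β := 1 / 2) (by linarith) (by linarith)
        hu1 (by norm_num) (by norm_num)
      have hA : ∑ z, (V c z - (if z = x₁ then m else 0) - (if z = x₂ then m else 0)) *
          G j (w c z + a) ≤ (1 - 2 * m) * (B * u ^ (-(1 / 2) : ℝ)) := by
        calc _ ≤ ∑ z, (V c z - (if z = x₁ then m else 0) - (if z = x₂ then m else 0)) *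
              (B * u ^ (-(1 / 2) : ℝ)) :=
              Finset.sum_le_sum fun z _ => mul_le_mul_of_nonneg_left (ihG j _) (hrest z)
          _ ≤ _ := by
              rw [← Finset.sum_mul]
              exact mul_le_mul_of_nonneg_right hrest1 (by positivity)
      have hC : 2 * m * G (j + 1) (w c x₁ + a) ≤ 2 * m * (B * (u + 1) ^ (-(1 / 2) : ℝ)) := by
        refine mul_le_mul_of_nonneg_left ?_ (by linarith)
        have h := ihG (j + 1) (w c x₁ + a)
        rwa [show m * occ c y + ((j + 1 : ℕ) : ℝ) + 1 = u + 1 by rw [hu]; push_cast; ring] at h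
      have hfin := mul_le_mul_of_nonneg_left hmix hB0
      have heq : m * ((if c = c then 1 else 0) + occ c y) + j + 1 = u + 2 * m / 2 := by
        rw [if_pos rfl, hu]; ring
      rw [heq]
      linarith
    · rw [if_neg hc, zero_add]
      calc _ ≤ ∑ z, V c z * (B * (m * occ y₀ y + j + 1) ^ (-(1 / 2) : ℝ)) :=
            Finset.sum_le_sum fun z _ => mul_le_mul_of_nonneg_left (ihG j _) (hV c z)
        _ ≤ 1 * (B * (m * occ y₀ y + j + 1) ^ (-(1 / 2) : ℝ)) := by
            rw [← Finset.sum_mul]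
            exact mul_le_mul_of_nonneg_right (hV1 c) (by positivity)
        _ = _ := one_mul _

/-- A sum of independent letters, `occ y₀ y` of which are nondegenerate with the same law, does
not concentrate on any window finer than order `(occ y₀ y) ^ (-1 / 2)`. -/
theorem anticoncentration {X Y : Type*} [Fintype X] {V w : Y → X → ℝ} {y₀ : Y}
    {x₁ x₂ : X} {m δ B : ℝ} {f : ℝ → ℝ} (hV : ∀ y x, 0 ≤ V y x) (hV1 : ∀ y, ∑ x, V y x ≤ 1)
    (hx : x₁ ≠ x₂) (hm : 0 ≤ m) (hm1 : m ≤ V y₀ x₁) (hm2 : m ≤ V y₀ x₂)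
    (hw : w y₀ x₂ = w y₀ x₁ + δ) (hf : ∀ t, 0 ≤ f t)
    (hB : ∀ a n, ∑ i ∈ Finset.range n, f (a + δ * i) ≤ B) {N : ℕ} (y : Fin N → Y) (a : ℝ) :
    ∑ x : Fin N → X, (∏ n, V (y n) (x n)) * f (∑ n, w (y n) (x n) + a)
      ≤ B * (m * occ y₀ y + 1) ^ (-(1 / 2) : ℝ) := by
  simpa [binAvg_zero] using binAvg_anticoncentration hV hV1 hx hm hm1 hm2 hw hf hB y 0 a

/-- Negative moments of the number of occurrences of a letter under a product measure. -/
theorem sum_prod_mul_occ_rpow_le {Y : Type*} [Fintype Y] {g : Y → ℝ} (hg : ∀ y, 0 ≤ g y)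
    (b : Y) {F p β : ℝ} (hF : ∑ y, g y = F) (hF0 : 0 < F) (hp : p = g b / F) (hβ0 : 0 ≤ β)
    (hβ1 : β ≤ 1) (N : ℕ) {u : ℝ} (hu : 1 ≤ u) :
    ∑ y : Fin N → Y, (∏ n, g (y n)) * (occ b y + u) ^ (-β) ≤ F ^ N * (u + p / 2 * N) ^ (-β) := by
  have hp0 : 0 ≤ p := hp ▸ div_nonneg (hg b) hF0.le
  have hgb : g b = p * F := by rw [hp]; field_simp
  have hp1 : p ≤ 1 := by
    rw [hp, div_le_one hF0, ← hF]
    exact Finset.single_le_sum (fun y _ => hg y) (Finset.mem_univ b)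
  induction N generalizing u with
  | zero => simp [occ]
  | succ N ih =>
    have hsum : ∑ y : Fin (N + 1) → Y, (∏ n, g (y n)) * (occ b y + u) ^ (-β)
        = ∑ c, g c * ∑ y : Fin N → Y, (∏ n, g (y n)) *
            (occ b y + (u + if c = b then 1 else 0)) ^ (-β) := by
      rw [sum_pi_fin_succ]
      refine Finset.sum_congr rfl fun c _ => ?_
      rw [Finset.mul_sum]
      refine Finset.sum_congr rfl fun y _ => ?_
      simp only [Fin.prod_univ_succ, Fin.cons_zero, Fin.cons_succ, occ_cons]
      rw [mul_assoc]
      congr 3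
      ring
    set v := u + p / 2 * N with hv
    have hv1 : 1 ≤ v := by
      have : 0 ≤ p / 2 * N := by positivity
      linarith
    have hmix := rpow_neg_mix_le hp0 hp1 hv1 hβ0 hβ1
    rw [hsum]
    calc ∑ c, g c * ∑ y : Fin N → Y, (∏ n, g (y n)) *
            (occ b y + (u + if c = b then 1 else 0)) ^ (-β)
        ≤ ∑ c, g c * (F ^ N * ((u + if c = b then 1 else 0) + p / 2 * N) ^ (-β)) := by
          refine Finset.sum_le_sum fun c _ => mul_le_mul_of_nonneg_left (ih ?_) (hg c)
          split_ifs <;> linarith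
      _ = ∑ c, (g c * (F ^ N * v ^ (-β)) +
            if c = b then g c * (F ^ N * ((v + 1) ^ (-β) - v ^ (-β))) else 0) := by
          refine Finset.sum_congr rfl fun c _ => ?_
          split_ifs
          · rw [hv, show u + 1 + p / 2 * N = u + p / 2 * N + 1 by ring]; ring
          · rw [hv]; ring_nf
      _ = F ^ (N + 1) * (p * (v + 1) ^ (-β) + (1 - p) * v ^ (-β)) := by
          rw [Finset.sum_add_distrib, ← Finset.sum_mul, hF, Finset.sum_ite_eq']
          simp only [Finset.mem_univ, if_true]
          rw [hgb]; ring
      _ ≤ F ^ (N + 1) * (v + p / 2) ^ (-β) := mul_le_mul_of_nonneg_left hmix (by positivity)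
      _ = _ := by
          congr 2
          rw [hv]; push_cast; ring

theorem IsDist.sum_prod_mul_indicator_le {α : Type*} [Fintype α] {q : α → ℝ} (hq : IsDist q)
    (A : α → Prop) (n : ℕ) :
    ∑ c : Fin n → α, (∏ i, q (c i)) * (if ∃ i, A (c i) then (1 : ℝ) else 0)
      ≤ min 1 (n * ∑ x, q x * if A x then (1 : ℝ) else 0) := by
  have hprod : ∀ c : Fin n → α, 0 ≤ ∏ i, q (c i) :=
    fun c => Finset.prod_nonneg fun i _ => hq.1 _
  refine le_min ?_ ?_
  · calc _ ≤ ∑ c : Fin n → α, ∏ i, q (c i) := by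
          refine Finset.sum_le_sum fun c _ => ?_
          split_ifs <;> simp [hprod]
      _ = 1 := by
          have := Finset.sum_prod_piFinset Finset.univ (fun (_ : Fin n) => q)
          rw [Fintype.piFinset_univ] at this
          rw [this, hq.2]
          simp
  · have hmarg : ∀ i₀ : Fin n, ∑ c : Fin n → α,
        (∏ i, q (c i)) * (if A (c i₀) then (1 : ℝ) else 0)
        = ∑ x, q x * if A x then (1 : ℝ) else 0 := by
      intro i₀
      have := Finset.sum_prod_piFinset Finset.univ (fun (i : Fin n) x =>
        q x * if i = i₀ then (if A x then (1 : ℝ) else 0) else 1)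
      rw [Fintype.piFinset_univ] at this
      simp only [Finset.prod_mul_distrib, Finset.prod_ite_eq', Finset.mem_univ, if_true] at this
      rw [this, Finset.prod_eq_single i₀]
      · simp
      · intro i _ hi
        simp [hi, hq.2]
      · simp
    calc _ ≤ ∑ c : Fin n → α, ∑ i₀, (∏ i, q (c i)) * (if A (c i₀) then (1 : ℝ) else 0) := by
          refine Finset.sum_le_sum fun c _ => ?_
          rw [← Finset.mul_sum]
          refine mul_le_mul_of_nonneg_left ?_ (hprod c)
          have h0 : ∀ i ∈ Finset.univ, 0 ≤ (if A (c i) then (1 : ℝ) else 0) :=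
            fun i _ => by split_ifs <;> norm_num
          split_ifs with h
          · obtain ⟨i, hi⟩ := h
            have := Finset.single_le_sum h0 (Finset.mem_univ i)
            rwa [if_pos hi] at this
          · exact Finset.sum_nonneg h0
      _ = _ := by
          rw [Finset.sum_comm, Finset.sum_congr rfl fun i₀ _ => hmarg i₀]
          simp

/-- The probability, over a random code of size `n + 1`, of an error event of message `m`. -/
theorem IsDist.ensemble_le {α β : Type*} [Fintype α] [Fintype β] {q : α → ℝ} (hq : IsDist q)
    {h : α → β → ℝ} (hh : ∀ x y, 0 ≤ h x y) (A : α → β → α → Prop) {n : ℕ} (m : Fin (n + 1)) :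
    ∑ c : Fin (n + 1) → α, (∏ i, q (c i)) * ∑ y, h (c m) y *
        (if ∃ m', m' ≠ m ∧ A (c m) y (c m') then (1 : ℝ) else 0)
      ≤ ∑ x, ∑ y, q x * h x y *
          min 1 (n * ∑ x', q x' * if A x y x' then (1 : ℝ) else 0) := by
  rw [← (Fin.insertNthEquiv (fun _ : Fin (n + 1) => α) m).sum_comp, Fintype.sum_prod_type]
  refine Finset.sum_le_sum fun x _ => ?_
  have hex : ∀ (c : Fin n → α) y,
      (∃ m', m' ≠ m ∧ A x y ((m.insertNth x c : Fin (n + 1) → α) m')) ↔ ∃ i, A x y (c i) := by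
    intro c y
    constructor
    · rintro ⟨m', hm', hA⟩
      obtain ⟨i, rfl⟩ := Fin.exists_succAbove_eq hm'
      exact ⟨i, by simpa using hA⟩
    · rintro ⟨i, hA⟩
      exact ⟨m.succAbove i, Fin.succAbove_ne m i, by simpa using hA⟩
  simp only [Fin.insertNthEquiv_apply, Fin.prod_univ_succAbove _ m, Fin.insertNth_apply_same,
    Fin.insertNth_apply_succAbove, hex, Finset.mul_sum]
  rw [Finset.sum_comm]
  refine Finset.sum_le_sum fun y _ => ?_
  have := hq.sum_prod_mul_indicator_le (fun x' => A x y x') n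
  calc _ = q x * h x y * ∑ c : Fin n → α, (∏ i, q (c i)) *
        (if ∃ i, A x y (c i) then (1 : ℝ) else 0) := by
        rw [Finset.mul_sum]
        exact Finset.sum_congr rfl fun c _ => by ring
    _ ≤ _ := by
        rw [← Finset.mul_sum]
        exact mul_le_mul_of_nonneg_left this (mul_nonneg (hq.1 x) (hh x y))

/-- The random coding union bound. -/
theorem Pbar_le_union {X Y : Type*} [Fintype X] [Fintype Y] {W : X → Y → ℝ}
    (hW : IsChannel W) {Q : X → ℝ} (hQ : IsDist Q) (N : ℕ) (R : ℝ) :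
    Pbar W Q N R ≤ ∑ y : Fin N → Y, ∑ x : Fin N → X, (∏ n, Q (x n)) * Wn W x y *
      min 1 (Real.exp (N * R) * ∑ x' : Fin N → X,
        (∏ n, Q (x' n)) * if Wn W x y ≤ Wn W x' y then (1 : ℝ) else 0) := by
  have hWn : ∀ (x : Fin N → X) (y : Fin N → Y), 0 ≤ Wn W x y :=
    fun x y => Finset.prod_nonneg fun n _ => hW.1 _ _
  have hq : IsDist (fun x : Fin N → X => ∏ n, Q (x n)) := by
    refine ⟨fun x => Finset.prod_nonneg fun n _ => hQ.1 _, ?_⟩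
    have := Finset.sum_prod_piFinset Finset.univ (fun (_ : Fin N) => Q)
    rw [Fintype.piFinset_univ] at this
    rw [this, hQ.2]
    simp
  have hpos : 0 < nMsgs N R := Nat.ceil_pos.2 (Real.exp_pos _)
  have hlt : (nMsgs N R : ℝ) < Real.exp (N * R) + 1 := Nat.ceil_lt_add_one (Real.exp_pos _).le
  obtain ⟨n, hn⟩ : ∃ n, nMsgs N R = n + 1 := ⟨_, (Nat.succ_pred_eq_of_pos hpos).symm⟩
  rw [Pbar, hn]
  rw [hn] at hlt
  have hn1 : (n : ℝ) ≤ Real.exp (N * R) := by push_cast at hlt; linarith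
  set T : ℝ := ∑ y : Fin N → Y, ∑ x : Fin N → X, (∏ n, Q (x n)) * Wn W x y *
      min 1 (Real.exp (N * R) * ∑ x' : Fin N → X,
        (∏ n, Q (x' n)) * if Wn W x y ≤ Wn W x' y then (1 : ℝ) else 0) with hT
  have hm : ∀ m : Fin (n + 1), ∑ c : Fin (n + 1) → Fin N → X, (∏ i, ∏ n, Q (c i n)) *
      ∑ y, Wn W (c m) y *
        (if ∃ m', m' ≠ m ∧ Wn W (c m) y ≤ Wn W (c m') y then (1 : ℝ) else 0) ≤ T := by
    intro m
    have h := hq.ensemble_le hWn (fun x y x' => Wn W x y ≤ Wn W x' y) m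
    refine le_trans (le_of_eq ?_) (h.trans ?_)
    · refine Finset.sum_congr rfl fun c _ => ?_
      congr 1
    · rw [hT, Finset.sum_comm]
      refine Finset.sum_le_sum fun y _ => Finset.sum_le_sum fun x _ => ?_
      refine mul_le_mul_of_nonneg_left (min_le_min le_rfl ?_) (mul_nonneg (hq.1 x) (hWn x y))
      refine le_of_eq_of_le ?_ (mul_le_mul_of_nonneg_right hn1 (Finset.sum_nonneg fun x' _ => ?_))
      · congr
      · refine mul_nonneg (hq.1 x') ?_
        split_ifs <;> norm_num
  calc _ = ((n + 1 : ℕ) : ℝ)⁻¹ * ∑ m : Fin (n + 1), ∑ c : Fin (n + 1) → Fin N → X,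
        (∏ i, ∏ n, Q (c i n)) * ∑ y, Wn W (c m) y *
          (if ∃ m', m' ≠ m ∧ Wn W (c m) y ≤ Wn W (c m') y then (1 : ℝ) else 0) := by
        rw [Finset.sum_comm, Finset.mul_sum]
        refine Finset.sum_congr rfl fun c _ => ?_
        rw [← Finset.mul_sum]
        ring
    _ ≤ ((n + 1 : ℕ) : ℝ)⁻¹ * ∑ m : Fin (n + 1), T := by
        gcongr with m
        exact hm m
    _ = T := by
        rw [Finset.sum_const, Finset.card_univ, Fintype.card_fin, nsmul_eq_mul, ← mul_assoc,
          inv_mul_cancel₀ (by positivity), one_mul]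

theorem min_one_exp_le (ρ t : ℝ) :
    min 1 (Real.exp t) ≤ Real.exp (ρ * t - min ρ (1 - ρ) * |t|) := by
  rcases le_total 0 t with ht | ht
  · refine (min_le_left _ _).trans ?_
    rw [Real.one_le_exp_iff, abs_of_nonneg ht]
    nlinarith [min_le_left ρ (1 - ρ)]
  · refine (min_le_right _ _).trans ?_
    rw [Real.exp_le_exp, abs_of_nonpos ht]
    nlinarith [min_le_right ρ (1 - ρ)]

theorem Wn_eq_exp {X Y : Type*} {W : X → Y → ℝ} {N : ℕ} {x : Fin N → X} {y : Fin N → Y} (h : ∀ n, 0 < W (x n) (y n)) :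
    Wn W x y = Real.exp (∑ n, Real.log (W (x n) (y n))) := by
  rw [Real.exp_sum, Wn]
  exact Finset.prod_congr rfl fun n _ => (Real.exp_log (h n)).symm

/-- The normalization of the tilted posterior given the output letter `y`. -/
noncomputable def tiltSum {X Y : Type*} [Fintype X] (W : X → Y → ℝ) (Q : X → ℝ) (ρ : ℝ)
    (y : Y) : ℝ :=
  ∑ x, Q x * W x y ^ (1 / (1 + ρ))

section Tilt

variable {X Y : Type*} [Fintype X] {W : X → Y → ℝ} {Q : X → ℝ}

theorem tiltSum_nonneg (hW : ∀ x y, 0 ≤ W x y) (hQ : ∀ x, 0 ≤ Q x) (ρ : ℝ) (y : Y) :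
    0 ≤ tiltSum W Q ρ y :=
  Finset.sum_nonneg fun x _ => mul_nonneg (hQ x) (Real.rpow_nonneg (hW x y) _)

theorem tiltSum_pos (hW : ∀ x y, 0 ≤ W x y) (hQ : ∀ x, 0 ≤ Q x) (ρ : ℝ) {x : X} {y : Y}
    (hx : 0 < Q x) (hxy : 0 < W x y) : 0 < tiltSum W Q ρ y :=
  Finset.sum_pos' (fun x _ => mul_nonneg (hQ x) (Real.rpow_nonneg (hW x y) _))
    ⟨x, Finset.mem_univ x, mul_pos hx (Real.rpow_pos_of_pos hxy _)⟩

theorem sum_PXgY_le_one (ρ : ℝ) (y : Y) : ∑ x, PXgY W Q ρ x y ≤ 1 := by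
  simp only [PXgY, ← Finset.sum_div]
  exact div_self_le_one _

theorem PXgY_nonneg (hW : ∀ x y, 0 ≤ W x y) (hQ : ∀ x, 0 ≤ Q x) (ρ : ℝ) (x : X) (y : Y) :
    0 ≤ PXgY W Q ρ x y :=
  div_nonneg (mul_nonneg (hQ x) (Real.rpow_nonneg (hW x y) _)) (tiltSum_nonneg hW hQ ρ y)

theorem PXgY_pos (hW : ∀ x y, 0 ≤ W x y) (hQ : ∀ x, 0 ≤ Q x) (ρ : ℝ) {x : X} {y : Y}
    (hx : 0 < Q x) (hxy : 0 < W x y) : 0 < PXgY W Q ρ x y :=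
  div_pos (mul_pos hx (Real.rpow_pos_of_pos hxy _)) (tiltSum_pos hW hQ ρ hx hxy)

theorem prod_eq_tilt (hW : ∀ x y, 0 ≤ W x y) (hQ : ∀ x, 0 ≤ Q x) (ρ : ℝ) {N : ℕ}
    {x : Fin N → X} {y : Fin N → Y} (h : ∀ n, 0 < W (x n) (y n)) (hq : ∀ n, 0 < Q (x n)) :
    ∏ n, Q (x n) = (∏ n, tiltSum W Q ρ (y n)) * (∏ n, PXgY W Q ρ (x n) (y n)) *
      Real.exp (-(1 / (1 + ρ)) * ∑ n, Real.log (W (x n) (y n))) := by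
  rw [Finset.mul_sum, Real.exp_sum, ← Finset.prod_mul_distrib, ← Finset.prod_mul_distrib]
  refine Finset.prod_congr rfl fun n _ => ?_
  have hA := tiltSum_pos hW hQ ρ (hq n) (h n)
  have hP : PXgY W Q ρ (x n) (y n) =
      Q (x n) * W (x n) (y n) ^ (1 / (1 + ρ)) / tiltSum W Q ρ (y n) := rfl
  have hexp : W (x n) (y n) ^ (1 / (1 + ρ)) *
      Real.exp (-(1 / (1 + ρ)) * Real.log (W (x n) (y n))) = 1 := by
    rw [Real.rpow_def_of_pos (h n), ← Real.exp_add, Real.exp_eq_one_iff]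
    ring
  rw [hP, mul_div_cancel₀ _ hA.ne', mul_assoc, hexp, mul_one]

theorem union_term_le (hW : ∀ x y, 0 ≤ W x y) (hQ : ∀ x, 0 ≤ Q x) {ρ : ℝ} (hρ0 : 0 < ρ)
    (hρ1 : ρ < 1) {y₀ : Y} {x₁ x₂ : X} (hq1 : 0 < Q x₁) (hq2 : 0 < Q x₂) (hw1 : 0 < W x₁ y₀)
    (hlt : W x₁ y₀ < W x₂ y₀) :
    ∃ C m : ℝ, 0 < C ∧ 0 < m ∧ m ≤ 1 ∧ ∀ (N : ℕ) (r : ℝ) (y : Fin N → Y),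
      ∑ x : Fin N → X, (∏ n, Q (x n)) * Wn W x y * min 1 (Real.exp r * ∑ x' : Fin N → X,
        (∏ n, Q (x' n)) * if Wn W x y ≤ Wn W x' y then (1 : ℝ) else 0)
      ≤ C * Real.exp (ρ * r) * (∏ n, tiltSum W Q ρ (y n)) ^ (1 + ρ) *
          (m * occ y₀ y + 1) ^ (-((1 + ρ) / 2)) := by
  have hw2 : 0 < W x₂ y₀ := hw1.trans hlt
  set s : ℝ := 1 / (1 + ρ) with hs
  have hs0 : 0 < s := by positivity
  have hs1 : s * (1 + ρ) = 1 := by rw [hs]; field_simp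
  set κ : ℝ := s * min ρ (1 - ρ) with hκ
  have hmin : 0 < min ρ (1 - ρ) := lt_min hρ0 (by linarith)
  have hκ0 : 0 < κ := mul_pos hs0 hmin
  have hκs : κ ≤ s := by
    rw [hκ]
    nlinarith [min_le_left ρ (1 - ρ)]
  set δ : ℝ := Real.log (W x₂ y₀) - Real.log (W x₁ y₀) with hδ
  have hδ0 : 0 < δ := sub_pos.2 (Real.log_lt_log hw1 hlt)
  set V : Y → X → ℝ := fun y x => PXgY W Q ρ x y with hVdef
  set w : Y → X → ℝ := fun y x => Real.log (W x y) with hwdef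
  have hV : ∀ y x, 0 ≤ V y x := fun y x => PXgY_nonneg hW hQ ρ x y
  have hV1 : ∀ y, ∑ x, V y x ≤ 1 := fun y => sum_PXgY_le_one ρ y
  set m : ℝ := min (V y₀ x₁) (V y₀ x₂) with hm
  have hm0 : 0 < m := lt_min (PXgY_pos hW hQ ρ hq1 hw1) (PXgY_pos hW hQ ρ hq2 hw2)
  have hm1 : m ≤ 1 := (min_le_left _ _).trans
    ((Finset.single_le_sum (fun x _ => hV y₀ x) (Finset.mem_univ x₁)).trans (hV1 y₀))
  set B : ℝ := 2 / (1 - Real.exp (-κ * δ)) with hBdef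
  have hB0 : 0 < B := by
    have : Real.exp (-κ * δ) < 1 := by
      rw [Real.exp_lt_one_iff]; nlinarith [mul_pos hκ0 hδ0]
    exact div_pos two_pos (by linarith)
  refine ⟨B ^ (1 + ρ), m, by positivity, hm0, hm1, fun N r y => ?_⟩
  set A : ℝ := ∏ n, tiltSum W Q ρ (y n) with hA
  have hA0 : 0 ≤ A := Finset.prod_nonneg fun n _ => tiltSum_nonneg hW hQ ρ (y n)
  set S : (Fin N → X) → ℝ := fun x => ∑ n, w (y n) (x n) with hS
  set P : (Fin N → X) → ℝ := fun x => ∏ n, V (y n) (x n) with hP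
  have hP0 : ∀ x, 0 ≤ P x := fun x => Finset.prod_nonneg fun n _ => hV _ _
  set k : ℝ := m * occ y₀ y + 1 with hk
  have hk0 : 0 < k := by
    have := mul_nonneg hm0.le (occ_nonneg y₀ y)
    linarith
  set D : ℝ := B * k ^ (-(1 / 2) : ℝ) with hD
  have hD0 : 0 < D := by positivity
  have hconc : ∀ a, ∑ x, P x * Real.exp (-κ * |S x + a|) ≤ D := fun a =>
    anticoncentration hV hV1 (fun h => by rw [h] at hlt; exact lt_irrefl _ hlt) hm0.le
      (min_le_left _ _) (min_le_right _ _) (by simp only [hwdef, hδ]; ring)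
      (fun t => (Real.exp_pos (-κ * |t|)).le) (sum_exp_neg_abs_le hκ0 hδ0) y a
  set Pin : (Fin N → X) → ℝ := fun x => ∑ x' : Fin N → X,
    (∏ n, Q (x' n)) * if Wn W x y ≤ Wn W x' y then (1 : ℝ) else 0 with hPin
  have hposW : ∀ x : Fin N → X, 0 < Wn W x y → ∀ n, 0 < W (x n) (y n) := by
    intro x hx n
    exact lt_of_le_of_ne (hW _ _) fun h0 =>
      hx.ne' (Finset.prod_eq_zero (Finset.mem_univ n) h0.symm)
  have hposQ : ∀ x : Fin N → X, 0 < ∏ n, Q (x n) → ∀ n, 0 < Q (x n) := by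
    intro x hx n
    exact lt_of_le_of_ne (hQ _) fun h0 =>
      hx.ne' (Finset.prod_eq_zero (Finset.mem_univ n) h0.symm)
  have hPin_le : ∀ x : Fin N → X, 0 < Wn W x y → Pin x ≤ A * Real.exp (-s * S x) * D := by
    intro x hx
    have hx' := hposW x hx
    refine le_trans ?_ (mul_le_mul_of_nonneg_left (hconc (-S x)) (by positivity))
    rw [Finset.mul_sum]
    refine Finset.sum_le_sum fun x' _ => ?_
    have hrhs : 0 ≤ A * Real.exp (-s * S x) * (P x' * Real.exp (-κ * |S x' + -S x|)) := by
      have := hP0 x'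
      positivity
    split_ifs with hle
    · rcases (Finset.prod_nonneg fun n _ => hQ (x' n) : 0 ≤ ∏ n, Q (x' n)).eq_or_lt with h0 | h0
      · rwa [← h0, zero_mul]
      · have hW' := hposW x' (hx.trans_le hle)
        have hSS : S x ≤ S x' := by
          rw [Wn_eq_exp hx', Wn_eq_exp hW', Real.exp_le_exp] at hle
          exact hle
        rw [mul_one, prod_eq_tilt hW hQ ρ hW' (hposQ x' h0)]
        change A * P x' * Real.exp (-s * S x') ≤ _
        have : Real.exp (-s * S x') ≤ Real.exp (-s * S x) * Real.exp (-κ * |S x' + -S x|) := by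
          rw [← Real.exp_add, Real.exp_le_exp, abs_of_nonneg (by linarith)]
          nlinarith
        calc _ ≤ A * P x' * (Real.exp (-s * S x) * Real.exp (-κ * |S x' + -S x|)) :=
              mul_le_mul_of_nonneg_left this (mul_nonneg hA0 (hP0 x'))
          _ = _ := by ring
    · rwa [mul_zero]
  set L : ℝ := Real.log (Real.exp r * A * D) with hL
  have hterm : ∀ x : Fin N → X, (∏ n, Q (x n)) * Wn W x y * min 1 (Real.exp r * Pin x)
      ≤ A ^ (1 + ρ) * Real.exp (ρ * r) * D ^ ρ *
          (P x * Real.exp (-κ * |S x + -(L / s)|)) := by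
    intro x
    have hrhs : 0 ≤ A ^ (1 + ρ) * Real.exp (ρ * r) * D ^ ρ *
          (P x * Real.exp (-κ * |S x + -(L / s)|)) := by
      have := hP0 x
      positivity
    rcases (Finset.prod_nonneg fun n _ => hQ (x n) : 0 ≤ ∏ n, Q (x n)).eq_or_lt with h0 | h0
    · rwa [← h0, zero_mul, zero_mul]
    have hWn : 0 ≤ Wn W x y := Finset.prod_nonneg fun n _ => hW (x n) (y n)
    rcases hWn.eq_or_lt with h1 | h1
    · rwa [← h1, mul_zero, zero_mul]
    have hx := hposW x h1
    have hApos : 0 < A :=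
      Finset.prod_pos fun n _ => tiltSum_pos hW hQ ρ (hposQ x h0 n) (hx n)
    have hu : Real.exp r * Pin x ≤ Real.exp (L - s * S x) := by
      rw [sub_eq_add_neg, Real.exp_add, hL, Real.exp_log (by positivity)]
      calc _ ≤ Real.exp r * (A * Real.exp (-s * S x) * D) :=
            mul_le_mul_of_nonneg_left (hPin_le x h1) (Real.exp_pos _).le
        _ = _ := by ring_nf
    have hmin1 : min 1 (Real.exp r * Pin x) ≤
        Real.exp (ρ * (L - s * S x)) * Real.exp (-κ * |S x + -(L / s)|) := by
      refine (min_le_min le_rfl hu).trans ((min_one_exp_le ρ _).trans (le_of_eq ?_))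
      rw [← Real.exp_add]
      congr 1
      have : |L - s * S x| = s * |S x + -(L / s)| := by
        rw [← abs_of_pos hs0, ← abs_mul, ← abs_neg, abs_of_pos hs0]
        congr 1
        field_simp
        ring
      rw [this, hκ]
      ring
    have hLρ : Real.exp (ρ * L) = Real.exp (ρ * r) * A ^ ρ * D ^ ρ := by
      rw [mul_comm, hL, ← Real.rpow_def_of_pos (by positivity), Real.mul_rpow (by positivity)
        hD0.le, Real.mul_rpow (Real.exp_pos _).le hA0, ← Real.exp_mul, mul_comm r]
    rw [prod_eq_tilt hW hQ ρ hx (hposQ x h0), Wn_eq_exp hx]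
    change A * P x * Real.exp (-s * S x) * Real.exp (S x) * _ ≤ _
    calc _ ≤ A * P x * Real.exp (-s * S x) * Real.exp (S x) *
          (Real.exp (ρ * (L - s * S x)) * Real.exp (-κ * |S x + -(L / s)|)) := by
          refine mul_le_mul_of_nonneg_left hmin1 ?_
          have := hP0 x
          positivity
      _ = A * P x * (Real.exp (-s * S x) * Real.exp (S x) * Real.exp (-(ρ * s * S x))) *
            Real.exp (ρ * L) * Real.exp (-κ * |S x + -(L / s)|) := by
          rw [mul_sub, sub_eq_add_neg, Real.exp_add]
          ring_nf
      _ = A * P x * Real.exp (ρ * L) * Real.exp (-κ * |S x + -(L / s)|) := by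
          rw [← Real.exp_add, ← Real.exp_add,
            show -s * S x + S x + -(ρ * s * S x) = (1 - s * (1 + ρ)) * S x by ring, hs1]
          simp
      _ = _ := by
          rw [hLρ, Real.rpow_add hApos, Real.rpow_one]
          ring
  calc _ ≤ ∑ x, A ^ (1 + ρ) * Real.exp (ρ * r) * D ^ ρ *
          (P x * Real.exp (-κ * |S x + -(L / s)|)) := Finset.sum_le_sum fun x _ => hterm x
    _ ≤ A ^ (1 + ρ) * Real.exp (ρ * r) * D ^ ρ * D := by
        rw [← Finset.mul_sum]
        exact mul_le_mul_of_nonneg_left (hconc _) (by positivity)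
    _ = A ^ (1 + ρ) * Real.exp (ρ * r) * D ^ (1 + ρ) := by
        rw [add_comm 1 ρ, Real.rpow_add hD0 ρ 1, Real.rpow_one]
        ring
    _ = _ := by
        rw [hD, Real.mul_rpow hB0.le (by positivity), ← Real.rpow_mul hk0.le]
        ring_nf

end Tilt

theorem exists_lt_of_not_singular {X Y : Type*} [Fintype X] [Fintype Y] {W : X → Y → ℝ}
    (hW : IsChannel W) {Q : X → ℝ} (hQ : IsDist Q) (hns : ¬ Singular W Q) :
    ∃ x₁ y₀ x₂, 0 < Q x₁ ∧ 0 < Q x₂ ∧ 0 < W x₁ y₀ ∧ W x₁ y₀ < W x₂ y₀ := by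
  simp only [Singular, not_forall] at hns
  obtain ⟨x, y, z, hpos, hne⟩ := hns
  have hpos' : Q x ≠ 0 ∧ W x y ≠ 0 ∧ Q z ≠ 0 ∧ W z y ≠ 0 := by
    refine ⟨?_, ?_, ?_, ?_⟩ <;> intro h <;> simp [h] at hpos
  have hx := (hQ.1 x).lt_of_ne hpos'.1.symm
  have hz := (hQ.1 z).lt_of_ne hpos'.2.2.1.symm
  rcases lt_or_gt_of_ne hne with h | h
  · exact ⟨x, y, z, hx, hz, (hW.1 x y).lt_of_ne hpos'.2.1.symm, h⟩
  · exact ⟨z, y, x, hz, hx, (hW.1 z y).lt_of_ne hpos'.2.2.2.symm, h⟩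

theorem Pbar_le_of_nonsingular {X Y : Type*} [Fintype X] [Fintype Y] {W : X → Y → ℝ}
    (hW : IsChannel W) {Q : X → ℝ} (hQ : IsDist Q) (hns : ¬ Singular W Q) {ρ : ℝ}
    (hρ0 : 0 < ρ) (hρ1 : ρ < 1) :
    ∃ K : ℝ, 0 < K ∧ ∀ (N : ℕ) (R : ℝ), 0 < N → Pbar W Q N R ≤
      K * (N : ℝ) ^ (-((1 + ρ) / 2)) * Real.exp (-(N : ℝ) * (-ρ * R + Eo W ρ Q)) := by
  obtain ⟨x₁, y₀, x₂, hq1, hq2, hw1, hlt⟩ := exists_lt_of_not_singular hW hQ hns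
  obtain ⟨C, m, hC, hm0, hm1, hterm⟩ := union_term_le hW.1 hQ.1 hρ0 hρ1 hq1 hq2 hw1 hlt
  set β : ℝ := (1 + ρ) / 2 with hβ
  set g : Y → ℝ := fun y => tiltSum W Q ρ y ^ (1 + ρ) with hg
  have hg0 : ∀ y, 0 ≤ g y := fun y => Real.rpow_nonneg (tiltSum_nonneg hW.1 hQ.1 ρ y) _
  have hgy : 0 < g y₀ := Real.rpow_pos_of_pos (tiltSum_pos hW.1 hQ.1 ρ hq1 hw1) _
  set F : ℝ := ∑ y, g y with hF
  have hF0 : 0 < F := Finset.sum_pos' (fun y _ => hg0 y) ⟨y₀, Finset.mem_univ _, hgy⟩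
  set p : ℝ := g y₀ / F with hp
  have hp0 : 0 < p := div_pos hgy hF0
  refine ⟨C * m ^ (-β) * (p / 2) ^ (-β), by positivity, fun N R hN => ?_⟩
  have hN0 : (0 : ℝ) < N := by exact_mod_cast hN
  have hβ0 : 0 ≤ β := by linarith
  have hβ1 : β ≤ 1 := by linarith
  have hEo : Eo W ρ Q = -Real.log F := rfl
  have hFN : F ^ N = Real.exp (-(N : ℝ) * Eo W ρ Q) := by
    rw [hEo, ← Real.rpow_natCast, Real.rpow_def_of_pos hF0]
    ring_nf
  clear_value F p β
  calc Pbar W Q N R ≤ _ := Pbar_le_union hW hQ N R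
    _ ≤ ∑ y : Fin N → Y, C * Real.exp (ρ * (N * R)) *
          (∏ n, tiltSum W Q ρ (y n)) ^ (1 + ρ) * (m * occ y₀ y + 1) ^ (-β) :=
        Finset.sum_le_sum fun y _ => hterm N (N * R) y
    _ ≤ ∑ y : Fin N → Y, C * Real.exp (ρ * (N * R)) * m ^ (-β) *
          ((∏ n, g (y n)) * (occ y₀ y + 1) ^ (-β)) := by
        refine Finset.sum_le_sum fun y _ => ?_
        have hocc := occ_nonneg y₀ y
        have h1 : (m * occ y₀ y + 1) ^ (-β) ≤ m ^ (-β) * (occ y₀ y + 1) ^ (-β) := by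
          rw [← Real.mul_rpow hm0.le (by linarith)]
          exact Real.rpow_le_rpow_of_nonpos (by positivity) (by linarith) (neg_nonpos.2 hβ0)
        have h2 : (∏ n, tiltSum W Q ρ (y n)) ^ (1 + ρ) = ∏ n, g (y n) :=
          (Real.finsetProd_rpow _ _ (fun n _ => tiltSum_nonneg hW.1 hQ.1 ρ (y n)) _).symm
        have h3 : 0 ≤ ∏ n, g (y n) := Finset.prod_nonneg fun n _ => hg0 _
        rw [h2]
        calc _ ≤ C * Real.exp (ρ * (N * R)) * (∏ n, g (y n)) *
              (m ^ (-β) * (occ y₀ y + 1) ^ (-β)) :=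
              mul_le_mul_of_nonneg_left h1 (by positivity)
          _ = _ := by ring
    _ ≤ C * Real.exp (ρ * (N * R)) * m ^ (-β) * (F ^ N * (1 + p / 2 * N) ^ (-β)) := by
        rw [← Finset.mul_sum]
        refine mul_le_mul_of_nonneg_left ?_ (by positivity)
        exact sum_prod_mul_occ_rpow_le hg0 y₀ hF.symm hF0 hp hβ0 hβ1 N le_rfl
    _ ≤ C * Real.exp (ρ * (N * R)) * m ^ (-β) * (F ^ N * ((p / 2) ^ (-β) * N ^ (-β))) := by
        rw [← Real.mul_rpow (by positivity) hN0.le]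
        have h : (1 + p / 2 * N) ^ (-β) ≤ (p / 2 * N) ^ (-β) :=
          Real.rpow_le_rpow_of_nonpos (by positivity) (le_add_of_nonneg_left zero_le_one)
            (neg_nonpos.2 hβ0)
        exact mul_le_mul_of_nonneg_left (mul_le_mul_of_nonneg_left h (pow_nonneg hF0.le N))
          (by positivity)
    _ = _ := by
        rw [hFN, mul_add (-(N : ℝ)), Real.exp_add,
          show -(N : ℝ) * (-ρ * R) = ρ * (N * R) by ring]
        ring

theorem tiltSum_hasDerivAt {X Y : Type*} [Fintype X] {W : X → Y → ℝ} {Q : X → ℝ}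
    (hW : ∀ x y, 0 ≤ W x y) {ρ : ℝ} (hρ : -1 < ρ) (y : Y) :
    HasDerivAt (fun ρ => tiltSum W Q ρ y)
      (∑ x, Q x * (Real.log (W x y) * (-1 / (1 + ρ) ^ 2) * W x y ^ (1 / (1 + ρ)))) ρ := by
  refine HasDerivAt.fun_sum fun x _ => HasDerivAt.const_mul _ ?_
  have h1 : HasDerivAt (fun ρ : ℝ => 1 / (1 + ρ)) (-1 / (1 + ρ) ^ 2) ρ := by
    simpa only [one_div] using ((hasDerivAt_id' ρ).const_add 1).fun_inv (by linarith)
  rcases (hW x y).eq_or_lt with h0 | h0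
  · rw [← h0, Real.log_zero, zero_mul, zero_mul]
    refine (hasDerivAt_const ρ (0 : ℝ)).congr_of_eventuallyEq ?_
    filter_upwards [lt_mem_nhds hρ] with t ht
    exact Real.zero_rpow (one_div_ne_zero (by linarith))
  · exact h1.const_rpow h0

theorem tiltSum_rpow_hasDerivAt {X Y : Type*} [Fintype X] {W : X → Y → ℝ} {Q : X → ℝ}
    (hW : ∀ x y, 0 ≤ W x y) (hQ : ∀ x, 0 ≤ Q x) {ρ : ℝ} (hρ : -1 < ρ) (y : Y) :
    HasDerivAt (fun ρ => tiltSum W Q ρ y ^ (1 + ρ))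
      ((∑ x, Q x * (Real.log (W x y) * (-1 / (1 + ρ) ^ 2) * W x y ^ (1 / (1 + ρ)))) * (1 + ρ) *
        tiltSum W Q ρ y ^ (1 + ρ - 1) +
        1 * tiltSum W Q ρ y ^ (1 + ρ) * Real.log (tiltSum W Q ρ y)) ρ := by
  by_cases h : ∃ x, 0 < Q x ∧ 0 < W x y
  · obtain ⟨x, hx, hxy⟩ := h
    exact (tiltSum_hasDerivAt hW hρ y).rpow ((hasDerivAt_id ρ).const_add 1)
      (tiltSum_pos hW hQ ρ hx hxy)
  · have h0 : ∀ x, Q x = 0 ∨ W x y = 0 := by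
      intro x
      by_contra! hx
      exact h ⟨x, (hQ x).lt_of_ne hx.1.symm, (hW x y).lt_of_ne hx.2.symm⟩
    have hzero : ∀ t : ℝ, -1 < t → tiltSum W Q t y = 0 := by
      intro t ht
      refine Finset.sum_eq_zero fun x _ => ?_
      rcases h0 x with hx | hx
      · rw [hx, zero_mul]
      · rw [hx, Real.zero_rpow (one_div_ne_zero (by linarith)), mul_zero]
    have hder : ∑ x, Q x * (Real.log (W x y) * (-1 / (1 + ρ) ^ 2) * W x y ^ (1 / (1 + ρ)))
        = 0 := by
      refine Finset.sum_eq_zero fun x _ => ?_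
      rcases h0 x with hx | hx <;> simp [hx]
    rw [hder, hzero ρ hρ, Real.log_zero, mul_zero, zero_mul, zero_mul, add_zero]
    refine (hasDerivAt_const ρ (0 : ℝ)).congr_of_eventuallyEq ?_
    filter_upwards [lt_mem_nhds hρ] with t ht
    simp only [hzero t ht]
    exact Real.zero_rpow (by linarith)

theorem exists_pos_mul_pos {X Y : Type*} [Fintype X] [Fintype Y] {W : X → Y → ℝ}
    (hW : IsChannel W) {Q : X → ℝ} (hQ : IsDist Q) : ∃ x y, 0 < Q x ∧ 0 < W x y := by
  obtain ⟨x, -, hx⟩ := Finset.exists_lt_of_sum_lt (s := Finset.univ) (f := fun _ : X => (0 : ℝ))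
    (g := Q) (by simp [hQ.2])
  obtain ⟨y, -, hy⟩ := Finset.exists_lt_of_sum_lt (s := Finset.univ) (f := fun _ : Y => (0 : ℝ))
    (g := W x) (by simp [hW.2 x])
  exact ⟨x, y, hx, hy⟩

theorem Eo_hasDerivAt {X Y : Type*} [Fintype X] [Fintype Y] {W : X → Y → ℝ}
    (hW : IsChannel W) {Q : X → ℝ} (hQ : IsDist Q) {ρ : ℝ} (hρ : -1 < ρ) :
    HasDerivAt (fun ρ => Eo W ρ Q)
      (-((∑ y, ((∑ x, Q x * (Real.log (W x y) * (-1 / (1 + ρ) ^ 2) * W x y ^ (1 / (1 + ρ)))) *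
          (1 + ρ) * tiltSum W Q ρ y ^ (1 + ρ - 1) +
        1 * tiltSum W Q ρ y ^ (1 + ρ) * Real.log (tiltSum W Q ρ y))) /
        ∑ y, tiltSum W Q ρ y ^ (1 + ρ))) ρ := by
  obtain ⟨x, y, hx, hxy⟩ := exists_pos_mul_pos hW hQ
  have hF : 0 < ∑ y, tiltSum W Q ρ y ^ (1 + ρ) :=
    Finset.sum_pos' (fun y _ => Real.rpow_nonneg (tiltSum_nonneg hW.1 hQ.1 ρ y) _)
      ⟨y, Finset.mem_univ y, Real.rpow_pos_of_pos (tiltSum_pos hW.1 hQ.1 ρ hx hxy) _⟩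
  exact ((HasDerivAt.fun_sum fun y _ =>
    tiltSum_rpow_hasDerivAt hW.1 hQ.1 hρ y).log hF.ne').neg

theorem Eo_hasDerivAt_zero {X Y : Type*} [Fintype X] [Fintype Y] {W : X → Y → ℝ}
    (hW : IsChannel W) {Q : X → ℝ} (hQ : IsDist Q) :
    HasDerivAt (fun ρ => Eo W ρ Q) (MI W Q) 0 := by
  convert Eo_hasDerivAt hW hQ (ρ := 0) (by norm_num) using 1
  have hA : ∀ y, tiltSum W Q 0 y = ∑ x, Q x * W x y := fun y => by simp [tiltSum]
  have hF : ∑ y, tiltSum W Q 0 y ^ (1 + 0 : ℝ) = 1 := by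
    simp only [hA, add_zero, Real.rpow_one]
    rw [Finset.sum_comm]
    simp only [← Finset.mul_sum, hW.2, mul_one, hQ.2]
  rw [hF, div_one, MI, Finset.sum_comm, ← Finset.sum_neg_distrib]
  refine Finset.sum_congr rfl fun y _ => ?_
  simp only [add_zero, one_pow, div_one, Real.rpow_one, sub_self, Real.rpow_zero, mul_one,
    one_mul, hA]
  rw [neg_add, ← Finset.sum_neg_distrib, Finset.sum_mul, ← Finset.sum_neg_distrib,
    ← Finset.sum_add_distrib]
  refine Finset.sum_congr rfl fun x _ => ?_
  rcases (mul_nonneg (hQ.1 x) (hW.1 x y)).eq_or_lt with h0 | h0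
  · rcases mul_eq_zero.1 h0.symm with h | h <;> simp [h]
  · have hP : 0 < ∑ x', Q x' * W x' y :=
      h0.trans_le (Finset.single_le_sum (fun x _ => mul_nonneg (hQ.1 x) (hW.1 x y))
        (Finset.mem_univ x))
    have hWpos : W x y ≠ 0 := fun h => by simp [h] at h0
    rw [Real.log_div hWpos hP.ne']
    ring

theorem Eo_continuousOn {X Y : Type*} [Fintype X] [Fintype Y] {W : X → Y → ℝ}
    (hW : IsChannel W) {Q : X → ℝ} (hQ : IsDist Q) (R : ℝ) :
    ContinuousOn (fun ρ => -ρ * R + Eo W ρ Q) (Set.Icc 0 1) := by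
  refine ContinuousOn.add (by fun_prop) fun ρ hρ => ?_
  exact (Eo_hasDerivAt hW hQ (by linarith [hρ.1])).continuousAt.continuousWithinAt

theorem le_ErQ {X Y : Type*} [Fintype X] [Fintype Y] {W : X → Y → ℝ}
    (hW : IsChannel W) {Q : X → ℝ} (hQ : IsDist Q) (R : ℝ) {ρ : ℝ} (hρ : ρ ∈ Set.Icc (0 : ℝ) 1) :
    -ρ * R + Eo W ρ Q ≤ ErQ W R Q :=
  le_csSup (isCompact_Icc.image_of_continuousOn (Eo_continuousOn hW hQ R)).bddAbove
    (Set.mem_image_of_mem _ hρ)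

/-- Strictly between the critical rate and the mutual information, the random coding exponent is
attained at an interior point. -/
theorem exists_ErQ_eq {X Y : Type*} [Fintype X] [Fintype Y] {W : X → Y → ℝ}
    (hW : IsChannel W) {Q : X → ℝ} (hQ : IsDist Q) {R : ℝ} (hR1 : RcrQ W Q < R)
    (hR2 : R < MI W Q) :
    ∃ ρ ∈ Set.Ioo (0 : ℝ) 1, ErQ W R Q = -ρ * R + Eo W ρ Q := by
  obtain ⟨ρ, hρ, hmax⟩ := isCompact_Icc.exists_isMaxOn (Set.nonempty_Icc.2 zero_le_one)
    (Eo_continuousOn hW hQ R)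
  have hval : ErQ W R Q = -ρ * R + Eo W ρ Q :=
    IsGreatest.csSup_eq ⟨Set.mem_image_of_mem _ hρ, by rintro _ ⟨t, ht, rfl⟩; exact hmax ht⟩
  have hlin : ∀ {d t : ℝ}, HasDerivAt (fun ρ => Eo W ρ Q) d t →
      HasDerivAt (fun ρ => -ρ * R + Eo W ρ Q) (d - R) t := by
    intro d t h
    exact (((hasDerivAt_id' t).fun_neg.mul_const R).fun_add h).congr_deriv (by ring)
  have hne0 : ρ ≠ 0 := by
    rintro rfl
    have hd := (hlin (Eo_hasDerivAt_zero hW hQ)).hasDerivWithinAt (s := Set.Icc 0 1)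
    have := hmax.localize.hasFDerivWithinAt_nonpos hd.hasFDerivWithinAt
      (sub_mem_posTangentConeAt_of_segment_subset (y := 1) (by
        rw [segment_eq_Icc zero_le_one]))
    simp at this
    linarith
  have hne1 : ρ ≠ 1 := by
    rintro rfl
    have hd1 : HasDerivAt (fun ρ => Eo W ρ Q) (RcrQ W Q) 1 :=
      (Eo_hasDerivAt hW hQ (ρ := 1) (by norm_num)).differentiableAt.hasDerivAt
    have hd := (hlin hd1).hasDerivWithinAt (s := Set.Icc 0 1)
    have := hmax.localize.hasFDerivWithinAt_nonpos hd.hasFDerivWithinAt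
      (sub_mem_posTangentConeAt_of_segment_subset (y := 0) (by
        rw [segment_symm, segment_eq_Icc zero_le_one]))
    simp at this
    linarith
  exact ⟨ρ, ⟨hρ.1.lt_of_ne hne0.symm, hρ.2.lt_of_ne hne1⟩, hval⟩

theorem rhoStarQ_le {X Y : Type*} [Fintype X] [Fintype Y] {W : X → Y → ℝ}
    (hW : IsChannel W) {Q : X → ℝ} (hQ : IsDist Q) {R ρ : ℝ} (hρ : ρ ∈ Set.Icc (0 : ℝ) 1)
    (hval : ErQ W R Q = -ρ * R + Eo W ρ Q) : rhoStarQ W Q R ≤ ρ := by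
  by_cases hd : DifferentiableAt ℝ (fun a => ErQ W a Q) R
  · have hmin : IsLocalMin (fun a => ErQ W a Q + ρ * a) R := by
      refine Filter.Eventually.of_forall fun a => ?_
      have := le_ErQ hW hQ a hρ
      simp only [hval]
      linarith
    have h0 := hmin.hasDerivAt_eq_zero (hd.hasDerivAt.add ((hasDerivAt_id R).const_mul ρ))
    rw [rhoStarQ]
    linarith
  · rw [rhoStarQ, deriv_zero_of_not_differentiableAt hd, neg_zero]
    exact hρ.1

/-- Refined random coding bound, nonsingular case: ensemble average error
probability is at most `K₂ · N^{-(1+ρ*_R(Q))/2} · exp(-N E_r(R,Q))`. -/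
theorem statement2 {X Y : Type*} [Fintype X] [Fintype Y] [Nonempty X] [Nonempty Y]
    (W : X → Y → ℝ) (hW : IsChannel W) (hcr : Rcr W < Capacity W)
    (Q : X → ℝ) (hQ : IsDist Q) (R : ℝ) (hR : 0 < R)
    (hns : ¬ Singular W Q) (hR1 : RcrQ W Q < R) (hR2 : R < MI W Q) :
    ∃ K : ℝ, 0 < K ∧ ∀ N : ℕ, 0 < N →
      Pbar W Q N R ≤
        K * (N : ℝ) ^ (-(1 + rhoStarQ W Q R) / 2) * Real.exp (-(N : ℝ) * ErQ W R Q) := by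
  obtain ⟨ρ, hρ, hval⟩ := exists_ErQ_eq hW hQ hR1 hR2
  obtain ⟨K, hK, hbound⟩ := Pbar_le_of_nonsingular hW hQ hns hρ.1 hρ.2
  refine ⟨K, hK, fun N hN => ?_⟩
  have hN1 : (1 : ℝ) ≤ N := by exact_mod_cast hN
  have hle := rhoStarQ_le hW hQ (Set.Ioo_subset_Icc_self hρ) hval
  rw [hval]
  refine (hbound N R hN).trans ?_
  gcongr
  linarith

end RCB
end
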